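/- arXiv:1209.4558 — 3 statements merged into one kernel-verified Lean document; each statement's English description precedes it below -/
import Mathlib

section
/- For the D_n^{(1)} crystal B^{1,s}, wt(ẽ_i b) = wt(b) + α_i whenever ẽ_i b ≠ 0, and wt(f̃_i b) = wt(b) − α_i whenever f̃_i b ≠ 0, for all i ∈ {0,1,…,n}. -/
open scoped Classical


/-- Coordinates `((x₁,…,x_M),(x̄₁,…,x̄_M))` (with `M = m+4`) for the
`D_M^{(1)}`-crystal `B^{1,s}`. -/
abbrev DV (m : ℕ) : Type := (Fin (m + 4) → ℤ) × (Fin (m + 4) → ℤ)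

/-- Membership in `B^{1,s}`: nonnegative coordinates summing to `s`,
with `x_M = 0` or `x̄_M = 0`. -/
def DMem (m s : ℕ) (v : DV m) : Prop :=
  (∀ j, 0 ≤ v.1 j) ∧ (∀ j, 0 ≤ v.2 j) ∧
  ((Finset.univ.sum v.1) + (Finset.univ.sum v.2) = (s : ℤ)) ∧
  (v.1 ⟨m + 3, by omega⟩ = 0 ∨ v.2 ⟨m + 3, by omega⟩ = 0)

/-- Add `d` to the `j`-th coordinate. -/
noncomputable def bump {m : ℕ} (f : Fin (m + 4) → ℤ) (j : Fin (m + 4)) (d : ℤ) :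
    Fin (m + 4) → ℤ :=
  Function.update f j (f j + d)

/-- The raw coordinate formula for `ẽ_i` on `B^{1,s}` (index `0 ≤ i ≤ M`). -/
noncomputable def eRaw (m : ℕ) (i : ℕ) (v : DV m) : DV m :=
  if i = 0 then
    (if v.2 1 < v.1 1 then (bump v.1 1 (-1), bump v.2 0 1) else (bump v.1 0 (-1), bump v.2 1 1))
  else if h : i ≤ m + 3 then
    (if v.2 ⟨i, by omega⟩ < v.1 ⟨i, by omega⟩ then
       (bump (bump v.1 ⟨i - 1, by omega⟩ 1) ⟨i, by omega⟩ (-1), v.2)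
     else (v.1, bump (bump v.2 ⟨i, by omega⟩ 1) ⟨i - 1, by omega⟩ (-1)))
  else
    (if v.2 ⟨m + 3, by omega⟩ = 0 then
       (bump v.1 ⟨m + 3, by omega⟩ 1, bump v.2 ⟨m + 2, by omega⟩ (-1))
     else (bump v.1 ⟨m + 2, by omega⟩ 1, bump v.2 ⟨m + 3, by omega⟩ (-1)))

/-- The raw coordinate formula for `f̃_i` on `B^{1,s}`. -/
noncomputable def fRaw (m : ℕ) (i : ℕ) (v : DV m) : DV m :=
  if i = 0 then
    (if v.2 1 ≤ v.1 1 then (bump v.1 1 1, bump v.2 0 (-1)) else (bump v.1 0 1, bump v.2 1 (-1)))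
  else if h : i ≤ m + 3 then
    (if v.2 ⟨i, by omega⟩ ≤ v.1 ⟨i, by omega⟩ then
       (bump (bump v.1 ⟨i - 1, by omega⟩ (-1)) ⟨i, by omega⟩ 1, v.2)
     else (v.1, bump (bump v.2 ⟨i, by omega⟩ (-1)) ⟨i - 1, by omega⟩ 1))
  else
    (if 0 < v.1 ⟨m + 3, by omega⟩ then
       (bump v.1 ⟨m + 3, by omega⟩ (-1), bump v.2 ⟨m + 2, by omega⟩ 1)
     else (bump v.1 ⟨m + 2, by omega⟩ (-1), bump v.2 ⟨m + 3, by omega⟩ 1))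

/-- `ẽ_i` on `B^{1,s}`; the result is `0` (i.e. `none`) if it leaves the set. -/
noncomputable def eD (m s : ℕ) (i : ℕ) (v : DV m) : Option (DV m) :=
  if DMem m s (eRaw m i v) then some (eRaw m i v) else none

/-- `f̃_i` on `B^{1,s}`; the result is `0` (i.e. `none`) if it leaves the set. -/
noncomputable def fD (m s : ℕ) (i : ℕ) (v : DV m) : Option (DV m) :=
  if DMem m s (fRaw m i v) then some (fRaw m i v) else none

/-- `ε_i` on `B^{1,s}`. -/
noncomputable def epsD (m : ℕ) (i : ℕ) (v : DV m) : ℤ :=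
  if i = 0 then v.1 0 + max (v.1 1 - v.2 1) 0
  else if h : i ≤ m + 2 then
    v.2 ⟨i - 1, by omega⟩ + max (v.1 ⟨i, by omega⟩ - v.2 ⟨i, by omega⟩) 0
  else if i = m + 3 then v.2 ⟨m + 2, by omega⟩ + v.1 ⟨m + 3, by omega⟩
  else v.2 ⟨m + 2, by omega⟩ + v.2 ⟨m + 3, by omega⟩

/-- `φ_i` on `B^{1,s}`. -/
noncomputable def phiD (m : ℕ) (i : ℕ) (v : DV m) : ℤ :=
  if i = 0 then v.2 0 + max (v.2 1 - v.1 1) 0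
  else if h : i ≤ m + 2 then
    v.1 ⟨i - 1, by omega⟩ + max (v.2 ⟨i, by omega⟩ - v.1 ⟨i, by omega⟩) 0
  else if i = m + 3 then v.1 ⟨m + 2, by omega⟩ + v.2 ⟨m + 3, by omega⟩
  else v.1 ⟨m + 2, by omega⟩ + v.1 ⟨m + 3, by omega⟩

/-- The weight of an element of `B^{1,s}`, written in the basis of fundamental weights
`Λ₀, …, Λ_M` (working modulo the null root `δ`). -/
noncomputable def wtD (m : ℕ) (v : DV m) : Fin (m + 5) → ℤ := fun j =>
  if j.val = 0 then v.2 0 - v.1 0 + v.2 1 - v.1 1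
  else if h : j.val ≤ m + 2 then
    v.1 ⟨j.val - 1, by omega⟩ - v.2 ⟨j.val - 1, by omega⟩ +
      v.2 ⟨j.val, by omega⟩ - v.1 ⟨j.val, by omega⟩
  else if j.val = m + 3 then
    v.1 ⟨m + 2, by omega⟩ - v.2 ⟨m + 2, by omega⟩ +
      v.2 ⟨m + 3, by omega⟩ - v.1 ⟨m + 3, by omega⟩
  else
    v.1 ⟨m + 2, by omega⟩ - v.2 ⟨m + 2, by omega⟩ +
      v.1 ⟨m + 3, by omega⟩ - v.2 ⟨m + 3, by omega⟩

/-- Adjacency in the Dynkin diagram of `D_n^{(1)}` (here `n = m+4`):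
node `0` and node `1` are both attached to node `2`, nodes `2,…,n−2` form a chain,
and nodes `n−1` and `n` are both attached to node `n−2`. -/
def adjD (m : ℕ) (i j : ℕ) : Prop :=
  (i = 0 ∧ j = 2) ∨ (i = 2 ∧ j = 0) ∨ (i = 1 ∧ j = 2) ∨ (i = 2 ∧ j = 1) ∨
  (i + 1 = j ∧ 2 ≤ i ∧ j ≤ m + 3) ∨ (j + 1 = i ∧ 2 ≤ j ∧ i ≤ m + 3) ∨
  (i = m + 2 ∧ j = m + 4) ∨ (i = m + 4 ∧ j = m + 2)

/-- The Cartan matrix of `D_n^{(1)}` (here `n = m+4`). -/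
noncomputable def cartanD (m : ℕ) (i j : Fin (m + 5)) : ℤ :=
  if i = j then 2 else if adjD m i.val j.val then -1 else 0

/-- The simple root `α_i` of `D_n^{(1)}`, written in the basis of fundamental weights
(working modulo the null root `δ`): `α_i = Σ_j a_{ji} Λ_j`. -/
noncomputable def alphaD (m : ℕ) (i : Fin (m + 5)) : Fin (m + 5) → ℤ :=
  fun j => cartanD m j i

/-!
The weight of `b = (x, x̄)` depends only on `x - x̄`, read as a vector in the orthonormal basis
`ε₁, …, ε_n`. Since `D_n^{(1)}` is simply laced, every simple root has squared length `2` and is its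
own coroot: the coefficient of `Λ_j` in `wt b` is the inner product of `α_j` with `x - x̄`, and the
Cartan matrix is the Gram matrix of the simple roots. Whichever branch of their definition applies,
`ẽ_i` and `f̃_i` change `x - x̄` by exactly `α_i` and `-α_i`.
-/

/-- The simple root `α_i` of `D_n^{(1)}` modulo `δ` in the orthonormal basis `ε₁, …, ε_n`, that is
`α₀ = -ε₁ - ε₂`, `α_i = ε_i - ε_{i+1}` for `1 ≤ i < n`, and `α_n = ε_{n-1} + ε_n`. The coordinate of
`ε_k` has index `k - 1`, and, as in `eRaw`, every `i ≥ n` is treated as `n`. -/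
def simpleRoot (m i : ℕ) : Fin (m + 4) → ℤ :=
  if i = 0 then -(Pi.single 0 1 + Pi.single 1 1)
  else if h : i ≤ m + 3 then Pi.single ⟨i - 1, by omega⟩ 1 - Pi.single ⟨i, by omega⟩ 1
  else Pi.single ⟨m + 2, by omega⟩ 1 + Pi.single ⟨m + 3, by omega⟩ 1

section

variable {m : ℕ}

theorem bump_eq_add_single (f : Fin (m + 4) → ℤ) (j : Fin (m + 4)) (d : ℤ) :
    bump f j d = f + Pi.single j d := by
  rw [bump, Function.update_eq_iff]
  simp +contextual

theorem eRaw_fst_sub_snd (i : ℕ) (v : DV m) :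
    (eRaw m i v).1 - (eRaw m i v).2 = v.1 - v.2 + simpleRoot m i := by
  unfold eRaw simpleRoot
  split_ifs <;> simp only [bump_eq_add_single, Pi.single_neg] <;> abel

theorem fRaw_fst_sub_snd (i : ℕ) (v : DV m) :
    (fRaw m i v).1 - (fRaw m i v).2 = v.1 - v.2 - simpleRoot m i := by
  unfold fRaw simpleRoot
  split_ifs <;> simp only [bump_eq_add_single, Pi.single_neg] <;> abel

theorem simpleRoot_apply (i : ℕ) (k : Fin (m + 4)) :
    simpleRoot m i k =
      if i = 0 then if k.val ≤ 1 then -1 else 0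
      else if i ≤ m + 3 then (if k.val + 1 = i then 1 else 0) - (if k.val = i then 1 else 0)
      else if m + 2 ≤ k.val then 1 else 0 := by
  have hk := k.isLt
  unfold simpleRoot
  split_ifs <;>
    simp only [Pi.neg_apply, Pi.add_apply, Pi.sub_apply, Pi.single_apply, Fin.ext_iff, Fin.val_zero,
      Fin.val_one] <;>
    split_ifs <;> omega

theorem simpleRoot_dotProduct (i : ℕ) (x : Fin (m + 4) → ℤ) :
    simpleRoot m i ⬝ᵥ x =
      if i = 0 then -(x 0 + x 1)
      else if h : i ≤ m + 3 then x ⟨i - 1, by omega⟩ - x ⟨i, by omega⟩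
      else x ⟨m + 2, by omega⟩ + x ⟨m + 3, by omega⟩ := by
  unfold simpleRoot
  split_ifs <;> simp only [neg_dotProduct, add_dotProduct, sub_dotProduct, single_one_dotProduct]

theorem wtD_eq_simpleRoot_dotProduct (v : DV m) (j : Fin (m + 5)) :
    wtD m v j = simpleRoot m j ⬝ᵥ (v.1 - v.2) := by
  rw [simpleRoot_dotProduct]
  simp only [wtD, Pi.sub_apply]
  grind

theorem cartanD_eq_simpleRoot_dotProduct (i j : Fin (m + 5)) :
    cartanD m i j = simpleRoot m i ⬝ᵥ simpleRoot m j := by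
  obtain ⟨i, hi⟩ := i
  obtain ⟨j, hj⟩ := j
  have node_cases (k : ℕ) (hk : k < m + 5) : k = 0 ∨ (0 < k ∧ k ≤ m + 3) ∨ k = m + 4 := by omega
  simp only [simpleRoot_dotProduct, simpleRoot_apply, cartanD, adjD, Fin.mk.injEq, Fin.val_zero,
    Fin.val_one]
  rcases node_cases i hi with rfl | hi' | rfl <;> rcases node_cases j hj with rfl | hj' | rfl <;>
    grind

end

theorem B1s_wt_e_f_general (m : ℕ) (i : Fin (m + 5)) (v : DV m) :
    wtD m (eRaw m i v) = wtD m v + alphaD m i ∧ wtD m (fRaw m i v) = wtD m v - alphaD m i := by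
  constructor <;> ext j
  · simp only [Pi.add_apply, alphaD, wtD_eq_simpleRoot_dotProduct, cartanD_eq_simpleRoot_dotProduct,
      eRaw_fst_sub_snd, dotProduct_add]
  · simp only [Pi.sub_apply, alphaD, wtD_eq_simpleRoot_dotProduct, cartanD_eq_simpleRoot_dotProduct,
      fRaw_fst_sub_snd, dotProduct_sub]

/-- For the `D_n^{(1)}`-crystal `B^{1,s}` (here `n = m+4 ≥ 4`),
`wt(ẽ_i b) = wt(b) + α_i` whenever `ẽ_i b ≠ 0`, and `wt(f̃_i b) = wt(b) − α_i`
whenever `f̃_i b ≠ 0`, for all `i ∈ {0,1,…,n}`. -/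
theorem B1s_wt_e_f (m s : ℕ) (i : Fin (m + 5)) (v w : DV m) (hv : DMem m s v) :
    (eD m s i.val v = some w → wtD m w = wtD m v + alphaD m i) ∧
    (fD m s i.val v = some w → wtD m w = wtD m v - alphaD m i) := by
  simp only [eD, fD, Option.ite_none_right_eq_some, Option.some.injEq]
  exact ⟨fun h => h.2 ▸ (B1s_wt_e_f_general m i v).1, fun h => h.2 ▸ (B1s_wt_e_f_general m i v).2⟩
end

section
/- Let ξ : B(1 2 1) → B(1 1 2) be Lecouvey's map defined by the explicit nine-case formula on triples x⊗y⊗z of letters in the alphabet {1<2<⋯<n−1<n,n̄<(n−1)‾<⋯<1̄} (with n and n̄ incomparable). Then ξ is a bijection between the subcrystals B(1 2 1) and B(1 1 2) of the triple tensor power of the vector crystal of D_n. -/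
open scoped Classical

/-- The `D_n` alphabet: nonzero integers `a` with `|a| ≤ n`; `a > 0` is the letter `a`,
`a < 0` is the barred letter `(-a)‾`. -/
def inAlpha (n : ℕ) (a : ℤ) : Prop := a ≠ 0 ∧ a.natAbs ≤ n

/-- The partial order on the `D_n` alphabet (with `n` and `n̄` incomparable). -/
def lleD (n : ℕ) (a b : ℤ) : Prop :=
  (0 < a ∧ 0 < b ∧ a ≤ b) ∨ (a < 0 ∧ b < 0 ∧ a ≤ b) ∨
  (0 < a ∧ b < 0 ∧ ¬(a = (n : ℤ) ∧ b = -(n : ℤ)))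

/-- Strict version of the partial order. -/
def lltD (n : ℕ) (a b : ℤ) : Prop := lleD n a b ∧ a ≠ b

/-- Crystal data on an alphabet of letters. -/
structure LetterOps (L : Type) where
  e : L → Option L
  f : L → Option L
  eps : L → ℤ
  phi : L → ℤ

/-- The crystal `B(Λ₁)` of `D_n`, for the classical index `1 ≤ i ≤ n`. -/
noncomputable def DLet (n i : ℕ) : LetterOps ℤ where
  e b := if i < n then
      (if b = (i : ℤ) + 1 then some (i : ℤ) else if b = -(i : ℤ) then some (-(i : ℤ) - 1) else none)
    else
      (if b = -((n : ℤ) - 1) then some (n : ℤ) else if b = -(n : ℤ) then some ((n : ℤ) - 1) else none)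
  f b := if i < n then
      (if b = (i : ℤ) then some ((i : ℤ) + 1) else if b = -(i : ℤ) - 1 then some (-(i : ℤ)) else none)
    else
      (if b = (n : ℤ) then some (-((n : ℤ) - 1)) else if b = (n : ℤ) - 1 then some (-(n : ℤ)) else none)
  eps b := if i < n then (if b = (i : ℤ) + 1 ∨ b = -(i : ℤ) then 1 else 0)
    else (if b = -((n : ℤ) - 1) ∨ b = -(n : ℤ) then 1 else 0)
  phi b := if i < n then (if b = (i : ℤ) ∨ b = -(i : ℤ) - 1 then 1 else 0)
    else (if b = (n : ℤ) ∨ b = (n : ℤ) - 1 then 1 else 0)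

/-- `ε_i` of a word `b₁ ⊗ b₂ ⊗ ⋯ ⊗ b_l` of letters, via the tensor product rule. -/
noncomputable def wEps {L : Type} (A : LetterOps L) : List L → ℤ
  | [] => 0
  | b :: t => max (A.eps b) (wEps A t - (A.phi b - A.eps b))

/-- `φ_i` of a word of letters, via the tensor product rule. -/
noncomputable def wPhi {L : Type} (A : LetterOps L) : List L → ℤ
  | [] => 0
  | b :: t => max (wPhi A t) (A.phi b + (wPhi A t - wEps A t))

/-- `ẽ_i` on a word of letters, via the tensor product rule. -/
noncomputable def wE {L : Type} (A : LetterOps L) : List L → Option (List L)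
  | [] => none
  | b :: t => if wEps A t ≤ A.phi b then (A.e b).map (· :: t) else (wE A t).map (b :: ·)

/-- `f̃_i` on a word of letters, via the tensor product rule. -/
noncomputable def wF {L : Type} (A : LetterOps L) : List L → Option (List L)
  | [] => none
  | b :: t => if wEps A t < A.phi b then (A.f b).map (· :: t) else (wF A t).map (b :: ·)

/-- One application of `ẽ_i` or `f̃_i` (for some classical index `1 ≤ i ≤ n`)
on a triple of letters, i.e. on `B(Λ₁)^{⊗3}` for `D_n`. -/
def step3 (n : ℕ) (a b : ℤ × ℤ × ℤ) : Prop :=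
  ∃ i, 1 ≤ i ∧ i ≤ n ∧
    (wE (DLet n i) [a.1, a.2.1, a.2.2] = some [b.1, b.2.1, b.2.2] ∨
     wF (DLet n i) [a.1, a.2.1, a.2.2] = some [b.1, b.2.1, b.2.2])

/-- The connected component (subcrystal) of `B(Λ₁)^{⊗3}` generated by `v`. -/
def comp3 (n : ℕ) (v : ℤ × ℤ × ℤ) : Set (ℤ × ℤ × ℤ) :=
  {w | Relation.ReflTransGen (step3 n) v w}

/-- Lecouvey's map `ξ`, given by the explicit nine-case formula on triples
`x ⊗ y ⊗ z` of letters of the `D_n` alphabet. -/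
noncomputable def xi (n : ℕ) (t : ℤ × ℤ × ℤ) : ℤ × ℤ × ℤ :=
  let x := t.1; let y := t.2.1; let z := t.2.2
  if lleD n z x ∧ lltD n x y ∧ y ≠ -z then (x, z, y)
  else if lltD n x z ∧ lleD n z y ∧ y ≠ -x then (y, x, z)
  else if y = -z ∧ 0 < z ∧ z < (n : ℤ) - 1 ∧ lltD n z x ∧ lltD n x (-z) then
    (x, z + 1, -(z + 1))
  else if y = -x ∧ 1 < x ∧ x < (n : ℤ) ∧ lleD n x z ∧ lleD n z (-x) then
    (-(x - 1), x - 1, z)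
  else if lleD n (-((n : ℤ) - 1)) y ∧ ((x = -(n : ℤ) ∧ z = (n : ℤ)) ∨ (x = (n : ℤ) ∧ z = -(n : ℤ))) then
    (y, x, z)
  else if lleD n z ((n : ℤ) - 1) ∧ ((x = -(n : ℤ) ∧ y = (n : ℤ)) ∨ (x = (n : ℤ) ∧ y = -(n : ℤ))) then
    (x, z, y)
  else if (x = (n : ℤ) ∧ y = -(n : ℤ) ∧ z = -(n : ℤ)) ∨ (x = -(n : ℤ) ∧ y = (n : ℤ) ∧ z = (n : ℤ)) then
    (-((n : ℤ) - 1), (n : ℤ) - 1, z)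
  else if x = -(n : ℤ) ∧ y = -((n : ℤ) - 1) ∧ z = (n : ℤ) - 1 then (-(n : ℤ), -(n : ℤ), (n : ℤ))
  else if x = (n : ℤ) ∧ y = -((n : ℤ) - 1) ∧ z = (n : ℤ) - 1 then ((n : ℤ), (n : ℤ), -(n : ℤ))
  else t

/-!
Along the arrows of a single colour every string of letters has length at most one, so the tensor
product rule is the same for `ẽ` and `f̃`: it selects which factor of a triple moves. Comparing two
letters with `≤` is insensitive to such a move except near the ends of an arrow, and from this one
checks that each step from a triple `t` is matched by a step of the same colour from `ξ(t)`, so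
that `ξ` sends the component of `v` into that of `ξ(v)`.

Reversing a triple and barring its letters reverses all arrows and turns the graph of `ξ` into the
graph of its inverse. Hence the inverse of `ξ` is a conjugate of `ξ`, which gives injectivity and
surjectivity.
-/

namespace LetterOps

variable {L : Type} {A : LetterOps L} {x y z x' y' z' : L}

/-- In the one-colour crystal `A` every string has length at most one: a letter admits at most one
of `ẽ` and `f̃`, and `eps` and `phi` record which. -/
structure IsMinuscule (A : LetterOps L) : Prop where
  phi_eq (a : L) : A.phi a = if (A.f a).isSome then 1 else 0
  eps_eq (a : L) : A.eps a = if (A.e a).isSome then 1 else 0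
  f_eq_none_or_e_eq_none (a : L) : A.f a = none ∨ A.e a = none

/-- `b` is obtained from `a` by `f̃` or `ẽ`: an edge of the crystal graph, without its direction. -/
def Linked (A : LetterOps L) (a b : L) : Prop :=
  A.e a = some b ∨ A.f a = some b

/-- A step along an edge of the triple tensor power of a one-colour crystal whose strings have
length at most one. In that case the tensor product rule selects the factor that moves by the same
conditions for `ẽ` and for `f̃`. -/
inductive TensorStep (A : LetterOps L) : L × L × L → L × L × L → Prop
  | fst {x x' y z : L} (link : A.Linked x x') (hy : A.eps y = 0) (hyz : A.eps z ≤ A.phi y) :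
      TensorStep A (x, y, z) (x', y, z)
  | snd {x y y' z : L} (hx : A.phi x = 0) (link : A.Linked y y') (hz : A.eps z = 0) :
      TensorStep A (x, y, z) (x, y', z)
  | trd {x y z z' : L} (hxy : A.phi x ≤ A.eps y) (hy : A.phi y = 0) (link : A.Linked z z') :
      TensorStep A (x, y, z) (x, y, z')

theorem IsMinuscule.eps_phi_cases (hA : A.IsMinuscule) (a : L) :
    A.eps a = 0 ∧ A.phi a = 0 ∧ A.e a = none ∧ A.f a = none ∨
    A.eps a = 1 ∧ A.phi a = 0 ∧ A.e a ≠ none ∧ A.f a = none ∨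
    A.eps a = 0 ∧ A.phi a = 1 ∧ A.e a = none ∧ A.f a ≠ none := by
  rcases hA.f_eq_none_or_e_eq_none a with h | h <;>
    simp only [hA.phi_eq, hA.eps_eq, h] <;> simp <;> tauto

theorem tensorStep_iff :
    A.TensorStep (x, y, z) (x', y', z') ↔
      A.Linked x x' ∧ y = y' ∧ z = z' ∧ A.eps y = 0 ∧ A.eps z ≤ A.phi y ∨
      A.Linked y y' ∧ x = x' ∧ z = z' ∧ A.phi x = 0 ∧ A.eps z = 0 ∨
      A.Linked z z' ∧ x = x' ∧ y = y' ∧ A.phi x ≤ A.eps y ∧ A.phi y = 0 := by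
  constructor
  · rintro (⟨h, hy, hyz⟩ | ⟨hx, h, hz⟩ | ⟨hxy, hy, h⟩) <;> tauto
  · rintro (⟨h, rfl, rfl, hy, hyz⟩ | ⟨h, rfl, rfl, hx, hz⟩ | ⟨h, rfl, rfl, hxy, hy⟩)
    exacts [.fst h hy hyz, .snd hx h hz, .trd hxy hy h]

theorem IsMinuscule.wE_or_wF_eq_some_iff (hA : A.IsMinuscule) :
    wE A [x, y, z] = some [x', y', z'] ∨ wF A [x, y, z] = some [x', y', z'] ↔
      A.TensorStep (x, y, z) (x', y', z') := by
  rw [tensorStep_iff]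
  rcases hA.eps_phi_cases x with hx | hx | hx <;>
  rcases hA.eps_phi_cases y with hy | hy | hy <;>
  rcases hA.eps_phi_cases z with hz | hz | hz <;>
  simp [wE, wF, wEps, Linked, hx, hy, hz]

end LetterOps

/-- The crystal on `ℤ` with the two arrows `p → q` and `-q → -p`. -/
noncomputable def twoArrows (p q : ℤ) : LetterOps ℤ where
  e b := if b = q then some p else if b = -p then some (-q) else none
  f b := if b = p then some q else if b = -q then some (-p) else none
  eps b := if b = q ∨ b = -p then 1 else 0
  phi b := if b = p ∨ b = -q then 1 else 0

/-- The colours of `D_n` correspond to the pairs `(p, q)` for which `p → q` and `q̄ → p̄` are the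
two arrows of that colour; here `q = n̄` for the last colour. -/
def IsColor (n : ℕ) (p q : ℤ) : Prop :=
  0 < p ∧ (q = p + 1 ∧ q ≤ n ∨ p + 1 = n ∧ q = -n)

variable {n i : ℕ} {p q : ℤ}

theorem DLet_of_lt (h : i < n) : DLet n i = twoArrows i (i + 1) := by
  simp only [DLet, twoArrows, h, if_true, neg_add']

theorem DLet_self (n : ℕ) : DLet n n = twoArrows (n - 1) (-n) := by
  simp only [DLet, twoArrows, lt_irrefl, if_false, neg_neg]
  congr 1 <;> funext b <;> grind

theorem exists_isColor_DLet_eq (hn : 2 ≤ n) (hi : 1 ≤ i) (hin : i ≤ n) :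
    ∃ p q, IsColor n p q ∧ DLet n i = twoArrows p q := by
  rcases hin.lt_or_eq with h | rfl
  · exact ⟨i, i + 1, ⟨by omega, .inl ⟨rfl, by omega⟩⟩, DLet_of_lt h⟩
  · exact ⟨i - 1, -i, ⟨by omega, .inr ⟨by omega, rfl⟩⟩, DLet_self i⟩

theorem IsColor.exists_DLet_eq (h : IsColor n p q) :
    ∃ i, 1 ≤ i ∧ i ≤ n ∧ DLet n i = twoArrows p q := by
  obtain ⟨hp, ⟨rfl, hq⟩ | ⟨hq, rfl⟩⟩ := h
  · lift p to ℕ using hp.le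
    exact ⟨p, by omega, by omega, DLet_of_lt (by omega)⟩
  · obtain rfl : p = n - 1 := by omega
    exact ⟨n, by omega, le_rfl, DLet_self n⟩

theorem IsColor.isMinuscule (h : IsColor n p q) : (twoArrows p q).IsMinuscule where
  phi_eq a := by grind [twoArrows]
  eps_eq a := by grind [twoArrows]
  f_eq_none_or_e_eq_none a := by grind [IsColor, twoArrows]

theorem twoArrows_linked_iff {a b : ℤ} : (twoArrows p q).Linked a b ↔
    (a = p ∧ b = q ∨ a = -q ∧ b = -p) ∨ (a = q ∧ b = p ∨ a = -p ∧ b = -q) := by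
  simp only [LetterOps.Linked, twoArrows]
  grind

theorem step3_iff {t t' : ℤ × ℤ × ℤ} (hn : 2 ≤ n) :
    step3 n t t' ↔ ∃ p q, IsColor n p q ∧ (twoArrows p q).TensorStep t t' := by
  constructor
  · rintro ⟨i, hi, hin, h⟩
    obtain ⟨p, q, hpq, hi⟩ := exists_isColor_DLet_eq hn hi hin
    exact ⟨p, q, hpq, hpq.isMinuscule.wE_or_wF_eq_some_iff.1 (hi ▸ h)⟩
  · rintro ⟨p, q, hpq, h⟩
    obtain ⟨i, hi, hin, hi'⟩ := hpq.exists_DLet_eq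
    exact ⟨i, hi, hin, hi' ▸ hpq.isMinuscule.wE_or_wF_eq_some_iff.2 h⟩

theorem twoArrows_eps (a : ℤ) : (twoArrows p q).eps a = if a = q ∨ a = -p then 1 else 0 := rfl

theorem twoArrows_phi (a : ℤ) : (twoArrows p q).phi a = if a = p ∨ a = -q then 1 else 0 := rfl

theorem inAlpha_iff {a : ℤ} : inAlpha n a ↔ a ≠ 0 ∧ -n ≤ a ∧ a ≤ n := by
  unfold inAlpha
  omega

/-- A triple of letters of the `D_n` alphabet. -/
def IsWord (n : ℕ) (t : ℤ × ℤ × ℤ) : Prop :=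
  inAlpha n t.1 ∧ inAlpha n t.2.1 ∧ inAlpha n t.2.2

/-- The graph of `ξ` on the triples to which its formula applies, with the nine cases merged into
four: negating `≤` instead of using `<` absorbs the cases of the incomparable letters `n` and `n̄`.
In the last two constructors `k` is `m + 1`, or for `m = n - 1` whichever of `n` and `n̄` is
dictated by the remaining letter. -/
inductive XiRel (n : ℕ) : ℤ × ℤ × ℤ → ℤ × ℤ × ℤ → Prop
  | swapRight {x y z : ℤ} (hzx : lleD n z x) (hyx : ¬ lleD n y x) (hyz : y ≠ -z) :
      XiRel n (x, y, z) (x, z, y)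
  | swapLeft {x y z : ℤ} (hzy : lleD n z y) (hzx : ¬ lleD n z x) (hyx : y ≠ -x) :
      XiRel n (x, y, z) (y, x, z)
  | shiftRight {x m k : ℤ} (hmx : lltD n m x) (hxm : lltD n x (-m))
      (hk : k = m + 1 ∧ k < n ∨ k = x ∧ m + 1 = n) :
      XiRel n (x, -m, m) (x, k, -k)
  | shiftLeft {z m k : ℤ} (hmz : lltD n m z) (hzm : lltD n z (-m))
      (hk : k = m + 1 ∧ k < n ∨ k = -z ∧ m + 1 = n) :
      XiRel n (k, -k, z) (-m, m, z)

variable {x y z x' y' z' m k : ℤ} {t t' s v w : ℤ × ℤ × ℤ}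

theorem eq_and_eq_neg_of_incomparable (hx : inAlpha n x) (hy : inAlpha n y)
    (hxy : ¬ lltD n x y) (hyx : ¬ lleD n y x) : (x = n ∨ x = -n) ∧ y = -x := by
  unfold lltD lleD inAlpha at *
  omega

theorem xi_swapRight (hx : inAlpha n x) (hy : inAlpha n y) (hz : inAlpha n z)
    (hzx : lleD n z x) (hyx : ¬ lleD n y x) (hyz : y ≠ -z) :
    xi n (x, y, z) = (x, z, y) := by
  by_cases hxy : lltD n x y
  · exact if_pos ⟨hzx, hxy, hyz⟩
  · obtain ⟨hx', rfl⟩ := eq_and_eq_neg_of_incomparable hx hy hxy hyx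
    unfold xi lltD lleD inAlpha at *
    dsimp only
    iterate 5 rw [if_neg (by omega)]
    exact if_pos (by omega)

theorem xi_swapLeft (hx : inAlpha n x) (hy : inAlpha n y) (hz : inAlpha n z)
    (hzy : lleD n z y) (hzx : ¬ lleD n z x) (hyx : y ≠ -x) :
    xi n (x, y, z) = (y, x, z) := by
  by_cases hxz : lltD n x z
  · unfold xi lltD lleD inAlpha at *
    dsimp only
    rw [if_neg (by omega)]
    exact if_pos (by omega)
  · obtain ⟨hx', rfl⟩ := eq_and_eq_neg_of_incomparable hx hz hxz hzx
    unfold xi lltD lleD inAlpha at *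
    dsimp only
    iterate 4 rw [if_neg (by omega)]
    exact if_pos (by omega)

theorem xi_shiftRight (hx : inAlpha n x) (hmx : lltD n m x) (hxm : lltD n x (-m))
    (hk : k = m + 1 ∧ k < n ∨ k = x ∧ m + 1 = n) :
    xi n (x, -m, m) = (x, k, -k) := by
  unfold xi lltD lleD inAlpha at *
  dsimp only
  iterate 2 rw [if_neg (by omega)]
  rcases hk with ⟨rfl, hk⟩ | ⟨rfl, hm⟩
  · exact if_pos (by omega)
  · iterate 5 rw [if_neg (by omega)]
    split_ifs <;> simp only [Prod.mk.injEq] <;> omega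

theorem xi_shiftLeft (hz : inAlpha n z) (hmz : lltD n m z) (hzm : lltD n z (-m))
    (hk : k = m + 1 ∧ k < n ∨ k = -z ∧ m + 1 = n) :
    xi n (k, -k, z) = (-m, m, z) := by
  unfold xi lltD lleD inAlpha at *
  dsimp only
  iterate 3 rw [if_neg (by omega)]
  rcases hk with ⟨rfl, hk⟩ | ⟨rfl, hm⟩
  · rw [if_pos (by omega), add_sub_cancel_right]
  · iterate 3 rw [if_neg (by omega)]
    rw [if_pos (by omega), ← hm, add_sub_cancel_right]

theorem XiRel.xi_eq (h : XiRel n t s) (hw : IsWord n t) : xi n t = s := by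
  cases h with
  | swapRight hzx hyx hyz => exact xi_swapRight hw.1 hw.2.1 hw.2.2 hzx hyx hyz
  | swapLeft hzy hzx hyx => exact xi_swapLeft hw.1 hw.2.1 hw.2.2 hzy hzx hyx
  | shiftRight hmx hxm hk => exact xi_shiftRight hw.1 hmx hxm hk
  | shiftLeft hmz hzm hk => exact xi_shiftLeft hw.2.2 hmz hzm hk

attribute [local grind =] twoArrows_linked_iff twoArrows_eps twoArrows_phi IsColor lltD lleD
  inAlpha_iff IsWord

/- Passing from one end of an arrow `a → b` to the other only affects comparison from below with
`b` itself, and `eps c = 0` says that no arrow ends at `c`. -/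
theorem lleD_iff_of_linked_right {a b c : ℤ} (hpq : IsColor n p q) (ha : inAlpha n a)
    (hc : inAlpha n c) (h : (twoArrows p q).Linked a b) (hc0 : (twoArrows p q).eps c = 0) :
    lleD n c a ↔ lleD n c b := by
  grind (splits := 20)

theorem lleD_iff_of_linked_left {a b c : ℤ} (hpq : IsColor n p q) (ha : inAlpha n a)
    (hc : inAlpha n c) (h : (twoArrows p q).Linked a b) (hc0 : (twoArrows p q).phi c = 0) :
    lleD n a c ↔ lleD n b c := by
  grind (splits := 20)

theorem exists_tensorStep_swapRight (hpq : IsColor n p q) (hw : IsWord n (x, y, z))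
    (hzx : lleD n z x) (hyx : ¬ lleD n y x) (hyz : y ≠ -z)
    (h : (twoArrows p q).TensorStep (x, y, z) (x', y', z')) :
    ∃ s, (twoArrows p q).TensorStep (x, z, y) s ∧ XiRel n (x', y', z') s := by
  have ⟨hxα, hyα, hzα⟩ := hw
  rcases LetterOps.tensorStep_iff.1 h with
    ⟨link, rfl, rfl, hy, hyz'⟩ | ⟨link, rfl, rfl, hx, hz⟩ | ⟨link, rfl, rfl, hxy, hy⟩
  · have hz : (twoArrows p q).eps z = 0 := by grind (splits := 20)
    rw [lleD_iff_of_linked_right hpq hxα hzα link hz] at hzx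
    rw [lleD_iff_of_linked_right hpq hxα hyα link hy] at hyx
    exact ⟨(x', z, y), .fst link hz (by grind), .swapRight hzx hyx hyz⟩
  · have hyx' := mt (lleD_iff_of_linked_left hpq hyα hxα link hx).2 hyx
    by_cases hyz' : y' = -z
    · obtain ⟨rfl, rfl, rfl⟩ : p = z ∧ -q = y ∧ -p = y' := by grind
      exact ⟨(x, q, -q), .snd hx (by grind) (by grind),
        .shiftRight (by grind) (by grind) (by grind)⟩
    · exact ⟨(x, z, y'), .trd (by grind) (by grind (splits := 20)) link, .swapRight hzx hyx' hyz'⟩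
  · by_cases hyz' : y = -z'
    · obtain ⟨rfl, rfl, rfl⟩ : q = z ∧ -p = y ∧ p = z' := by grind (splits := 20)
      exact ⟨(x, q, -q), .trd (by grind) (by grind) (by grind),
        .shiftRight (by grind) (by grind) (by grind (splits := 20))⟩
    by_cases hx : (twoArrows p q).phi x = 0
    · have hzx' := (lleD_iff_of_linked_left hpq hzα hxα link hx).1 hzx
      exact ⟨(x, z', y), .snd hx link (by grind), .swapRight hzx' hyx hyz'⟩
    -- With `phi x = 1` the target moves in its first factor although the source moves in its third.
    obtain ⟨rfl, rfl, rfl, rfl⟩ | ⟨rfl, rfl, rfl, rfl⟩ | ⟨rfl, rfl, rfl, rfl, hp⟩ :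
        p = x ∧ q = y ∧ p = z ∧ q = z' ∨ -q = x ∧ -p = y ∧ -q = z ∧ -p = z' ∨
          -q = x ∧ q = y ∧ p = z ∧ q = z' ∧ p + 1 = n := by
      grind (splits := 20)
    · exact ⟨(q, p, q), .fst (by grind) (by grind) (by grind),
        .swapLeft (by grind) (by grind) (by grind)⟩
    · exact ⟨(-p, -q, -p), .fst (by grind) (by grind) (by grind),
        .swapLeft (by grind) (by grind) (by grind)⟩
    · have hrel : XiRel n (-q, - -q, q) (-p, p, q) :=
        .shiftLeft (by grind) (by grind) (by grind)
      rw [neg_neg] at hrel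
      exact ⟨(-p, p, q), .fst (by grind) (by grind) (by grind), hrel⟩

theorem exists_tensorStep_swapLeft (hpq : IsColor n p q) (hw : IsWord n (x, y, z))
    (hzy : lleD n z y) (hzx : ¬ lleD n z x) (hyx : y ≠ -x)
    (h : (twoArrows p q).TensorStep (x, y, z) (x', y', z')) :
    ∃ s, (twoArrows p q).TensorStep (y, x, z) s ∧ XiRel n (x', y', z') s := by
  have ⟨hxα, hyα, hzα⟩ := hw
  rcases LetterOps.tensorStep_iff.1 h with
    ⟨link, rfl, rfl, hy, hyz⟩ | ⟨link, rfl, rfl, hx, hz⟩ | ⟨link, rfl, rfl, hxy, hy⟩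
  · by_cases hyx' : y = -x'
    · obtain ⟨rfl, rfl, rfl⟩ : p = x ∧ -q = y ∧ q = x' := by grind
      exact ⟨(-p, p, z), .fst (by grind) (by grind) (by grind),
        .shiftLeft (by grind) (by grind) (by grind)⟩
    · have hz : (twoArrows p q).eps z = 0 := by grind (splits := 20)
      rw [lleD_iff_of_linked_right hpq hxα hzα link hz] at hzx
      exact ⟨(y, x', z), .snd (by grind (splits := 20)) link hz, .swapLeft hzy hzx hyx'⟩
  · have hzy' := (lleD_iff_of_linked_right hpq hyα hzα link hz).1 hzy
    by_cases hyx' : y' = -x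
    · obtain ⟨rfl, rfl, rfl⟩ : q = x ∧ -p = y ∧ -q = y' := by grind
      exact ⟨(-p, p, z), .snd (by grind) (by grind) (by grind),
        .shiftLeft (by grind) (by grind) (by grind)⟩
    · exact ⟨(y', x, z), .fst link (by grind (splits := 20)) (by grind), .swapLeft hzy' hzx hyx'⟩
  · by_cases hx : (twoArrows p q).phi x = 0
    · rw [lleD_iff_of_linked_left hpq hzα hyα link hy] at hzy
      rw [lleD_iff_of_linked_left hpq hzα hxα link hx] at hzx
      exact ⟨(y, x, z'), .trd (by grind) hx link, .swapLeft hzy hzx hyx⟩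
    -- With `phi x = 1` the target moves in its first factor although the source moves in its third.
    obtain ⟨rfl, rfl, rfl, rfl⟩ | ⟨rfl, rfl, rfl, rfl⟩ | ⟨rfl, rfl, rfl, rfl, hp⟩ :
        p = x ∧ q = y ∧ q = z ∧ p = z' ∨ -q = x ∧ -p = y ∧ -p = z ∧ -q = z' ∨
          -q = x ∧ -p = y ∧ q = z ∧ p = z' ∧ p + 1 = n := by
      grind (splits := 20)
    · exact ⟨(p, p, q), .fst (by grind) (by grind) (by grind),
        .swapRight (by grind) (by grind) (by grind)⟩
    · exact ⟨(-q, -q, -p), .fst (by grind) (by grind) (by grind),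
        .swapRight (by grind) (by grind) (by grind)⟩
    · have hrel : XiRel n (-q, -p, p) (-q, -q, - -q) :=
        .shiftRight (by grind (splits := 20)) (by grind) (by grind)
      rw [neg_neg] at hrel
      exact ⟨(-q, -q, q), .fst (by grind) (by grind) (by grind), hrel⟩

theorem exists_tensorStep_shiftRight (hpq : IsColor n p q) (hw : IsWord n (x, -m, m))
    (hmx : lltD n m x) (hxm : lltD n x (-m)) (hk : k = m + 1 ∧ k < n ∨ k = x ∧ m + 1 = n)
    (h : (twoArrows p q).TensorStep (x, -m, m) (x', y', z')) :
    ∃ s, (twoArrows p q).TensorStep (x, k, -k) s ∧ XiRel n (x', y', z') s := by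
  rcases LetterOps.tensorStep_iff.1 h with
    ⟨link, rfl, rfl, hy, _⟩ | ⟨link, rfl, rfl, hx, hz⟩ | ⟨link, rfl, rfl, hxy, hy⟩
  · exact ⟨(x', k, -k), .fst link (by grind (splits := 20)) (by grind),
      .shiftRight (by grind (splits := 20)) (by grind (splits := 20)) (by grind)⟩
  · obtain ⟨rfl, rfl, rfl⟩ : p = m ∧ -q = y' ∧ q = k := by grind
    exact ⟨(x, p, -q), .snd (by grind) (by grind) (by grind),
      .swapRight (by grind) (by grind) (by grind)⟩
  · obtain ⟨rfl, rfl⟩ : p = m ∧ q = z' := by grind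
    by_cases hkq : k = q
    · subst hkq
      exact ⟨(x, k, -p), .trd (by grind) (by grind) (by grind),
        .swapRight (by grind) (by grind) (by grind)⟩
    · obtain ⟨rfl, rfl⟩ : -q = x ∧ -q = k := by grind
      rw [neg_neg]
      exact ⟨(-p, -q, q), .fst (by grind) (by grind) (by grind),
        .swapLeft (by grind) (by grind) (by grind)⟩

theorem exists_tensorStep_shiftLeft (hpq : IsColor n p q) (hw : IsWord n (k, -k, z))
    (hmz : lltD n m z) (hzm : lltD n z (-m)) (hk : k = m + 1 ∧ k < n ∨ k = -z ∧ m + 1 = n)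
    (h : (twoArrows p q).TensorStep (k, -k, z) (x', y', z')) :
    ∃ s, (twoArrows p q).TensorStep (-m, m, z) s ∧ XiRel n (x', y', z') s := by
  rcases LetterOps.tensorStep_iff.1 h with
    ⟨link, rfl, rfl, hy, hyz⟩ | ⟨link, rfl, rfl, hx, hz⟩ | ⟨link, rfl, rfl, hxy, hy⟩
  · obtain ⟨rfl, rfl, rfl⟩ : p = m ∧ p = x' ∧ q = k := by grind
    exact ⟨(-q, p, z), .fst (by grind) (by grind) (by grind),
      .swapLeft (by grind) (by grind) (by grind)⟩
  · obtain ⟨rfl, rfl, rfl⟩ : p = m ∧ -p = y' ∧ q = k := by grind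
    exact ⟨(-p, q, z), .snd (by grind) (by grind) (by grind),
      .swapLeft (by grind) (by grind) (by grind)⟩
  · by_cases hm : p = m
    · obtain ⟨rfl, rfl, rfl⟩ : q = z ∧ p = z' ∧ -q = k := by grind
      subst hm
      rw [neg_neg]
      exact ⟨(-q, p, q), .fst (by grind) (by grind) (by grind),
        .swapRight (by grind) (by grind) (by grind)⟩
    · exact ⟨(-m, m, z'), .trd (by grind) (by grind) link,
        .shiftLeft (by grind (splits := 20)) (by grind (splits := 20)) (by grind)⟩

theorem XiRel.exists_tensorStep (h : XiRel n t s) (hpq : IsColor n p q)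
    (hw : IsWord n t) (hstep : (twoArrows p q).TensorStep t t') :
    ∃ s', (twoArrows p q).TensorStep s s' ∧ XiRel n t' s' := by
  cases h with
  | swapRight hzx hyx hyz => exact exists_tensorStep_swapRight hpq hw hzx hyx hyz hstep
  | swapLeft hzy hzx hyx => exact exists_tensorStep_swapLeft hpq hw hzy hzx hyx hstep
  | shiftRight hmx hxm hk => exact exists_tensorStep_shiftRight hpq hw hmx hxm hk hstep
  | shiftLeft hmz hzm hk => exact exists_tensorStep_shiftLeft hpq hw hmz hzm hk hstep

theorem IsWord.of_tensorStep (hw : IsWord n t) (hpq : IsColor n p q)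
    (h : (twoArrows p q).TensorStep t t') : IsWord n t' := by
  cases h <;> grind

theorem XiRel.isWord (h : XiRel n t s) (hw : IsWord n t) : IsWord n s := by
  cases h <;> grind

/-- The involution `x ⊗ y ⊗ z ↦ z̄ ⊗ ȳ ⊗ x̄` on triples of letters, which reverses all arrows. -/
def dualWord (t : ℤ × ℤ × ℤ) : ℤ × ℤ × ℤ :=
  (-t.2.2, -t.2.1, -t.1)

theorem dualWord_dualWord (t : ℤ × ℤ × ℤ) : dualWord (dualWord t) = t := by
  simp [dualWord]

theorem lleD_neg_neg {a b : ℤ} : lleD n (-a) (-b) ↔ lleD n b a := by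
  grind

theorem IsWord.dual (h : IsWord n t) : IsWord n (dualWord t) := by
  grind [dualWord]

theorem LetterOps.TensorStep.dual (h : (twoArrows p q).TensorStep t t') :
    (twoArrows p q).TensorStep (dualWord t) (dualWord t') := by
  cases h with
  | fst link hy hyz => exact .trd (by grind) (by grind) (by grind)
  | snd hx link hz => exact .snd (by grind) (by grind) (by grind)
  | trd hxy hy link => exact .fst (by grind) (by grind) (by grind)

theorem XiRel.dual (h : XiRel n t s) : XiRel n (dualWord s) (dualWord t) := by
  cases h with
  | swapRight hzx hyx hyz =>
    exact .swapLeft (lleD_neg_neg.2 hzx) (mt lleD_neg_neg.1 hyx) (by grind)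
  | swapLeft hzy hzx hyx =>
    exact .swapRight (lleD_neg_neg.2 hzy) (mt lleD_neg_neg.1 hzx) (by grind)
  | shiftRight =>
    simp only [dualWord, neg_neg]
    exact .shiftLeft (by grind) (by grind) (by grind)
  | shiftLeft =>
    simp only [dualWord, neg_neg]
    exact .shiftRight (by grind) (by grind) (by grind)

theorem XiRel.left_unique (hw : IsWord n s) (h : XiRel n t s)
    (h' : XiRel n t' s) : t = t' := by
  rw [← dualWord_dualWord t, ← dualWord_dualWord t', ← h.dual.xi_eq hw.dual,
    ← h'.dual.xi_eq hw.dual]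

theorem step3.dual (hn : 2 ≤ n) (h : step3 n t t') :
    step3 n (dualWord t) (dualWord t') :=
  have ⟨p, q, hpq, h⟩ := (step3_iff hn).1 h
  (step3_iff hn).2 ⟨p, q, hpq, h.dual⟩

theorem dualWord_mem_comp3 (hn : 2 ≤ n) (ht : t ∈ comp3 n v) :
    dualWord t ∈ comp3 n (dualWord v) :=
  ht.lift dualWord fun _ _ => step3.dual hn

theorem XiRel.exists_step3 (hn : 2 ≤ n) (h : XiRel n t s) (hw : IsWord n t)
    (hstep : step3 n t t') : ∃ s', step3 n s s' ∧ XiRel n t' s' := by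
  obtain ⟨p, q, hpq, hstep⟩ := (step3_iff hn).1 hstep
  obtain ⟨s', hs', h'⟩ := h.exists_tensorStep hpq hw hstep
  exact ⟨s', (step3_iff hn).2 ⟨p, q, hpq, hs'⟩, h'⟩

theorem IsWord.of_mem_comp3 (hn : 2 ≤ n) (hv : IsWord n v) (ht : t ∈ comp3 n v) : IsWord n t := by
  induction ht with
  | refl => exact hv
  | tail _ hstep ih =>
    obtain ⟨p, q, hpq, hstep⟩ := (step3_iff hn).1 hstep
    exact ih.of_tensorStep hpq hstep

theorem XiRel.exists_mem_comp3 (hn : 2 ≤ n) (h : XiRel n v w) (hv : IsWord n v)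
    (ht : t ∈ comp3 n v) : ∃ s ∈ comp3 n w, XiRel n t s := by
  induction ht with
  | refl => exact ⟨w, .refl, h⟩
  | tail ht hstep ih =>
    obtain ⟨s, hs, hts⟩ := ih
    obtain ⟨s', hss', hts'⟩ := hts.exists_step3 hn (hv.of_mem_comp3 hn ht) hstep
    exact ⟨s', hs.tail hss', hts'⟩

theorem XiRel.exists_mem_comp3_symm (hn : 2 ≤ n) (h : XiRel n v w) (hw : IsWord n w)
    (hs : s ∈ comp3 n w) : ∃ t ∈ comp3 n v, XiRel n t s := by
  obtain ⟨t, ht, hst⟩ := h.dual.exists_mem_comp3 hn hw.dual (dualWord_mem_comp3 hn hs)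
  refine ⟨dualWord t, ?_, dualWord_dualWord s ▸ hst.dual⟩
  simpa only [dualWord_dualWord] using dualWord_mem_comp3 hn ht

theorem XiRel.bijOn_comp3 (hn : 2 ≤ n) (h : XiRel n v w) (hv : IsWord n v) :
    Set.BijOn (xi n) (comp3 n v) (comp3 n w) := by
  refine ⟨fun t ht => ?mapsTo, fun t ht t' ht' heq => ?injOn, fun s hs => ?surjOn⟩
  case mapsTo =>
    obtain ⟨s, hs, hts⟩ := h.exists_mem_comp3 hn hv ht
    rwa [hts.xi_eq (hv.of_mem_comp3 hn ht)]
  case injOn =>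
    have htw := hv.of_mem_comp3 hn ht
    have htw' := hv.of_mem_comp3 hn ht'
    obtain ⟨s, -, hts⟩ := h.exists_mem_comp3 hn hv ht
    obtain ⟨s', -, hts'⟩ := h.exists_mem_comp3 hn hv ht'
    obtain rfl : s = s' := by rw [← hts.xi_eq htw, heq, hts'.xi_eq htw']
    exact hts.left_unique (hts.isWord htw) hts'
  case surjOn =>
    obtain ⟨t, ht, hts⟩ := h.exists_mem_comp3_symm hn (h.isWord hv) hs
    exact ⟨t, ht, hts.xi_eq (hv.of_mem_comp3 hn ht)⟩

theorem xiRel_one_two_one : XiRel n (1, 2, 1) (1, 1, 2) :=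
  .swapRight (by grind) (by grind) (by grind)

theorem xi_bijOn_general (n : ℕ) (hn : 2 ≤ n) :
    Set.BijOn (xi n) (comp3 n (1, 2, 1)) (comp3 n (1, 1, 2)) :=
  xiRel_one_two_one.bijOn_comp3 hn (by grind)

/-- Lecouvey's map `ξ` is a bijection between the subcrystals
`B(1 2 1)` and `B(1 1 2)` of `B(Λ₁)^{⊗3}` for `D_n`. -/
theorem xi_bijOn (n : ℕ) (hn : 4 ≤ n) :
    Set.BijOn (xi n) (comp3 n (1, 2, 1)) (comp3 n (1, 1, 2)) :=
  xi_bijOn_general n (by omega)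
end

section
/- The map i_s from the A₁^{(1)} ⊕ D_{n−2}^{(1)} crystal B̂^{1,s} × B^{1,s} (n > 5) to (B^{2,1})^{⊗s}, sending ((j, s−j), (b₁,…,b_s)) to [2/b_s′]⊗⋯⊗[2/b_{s−j}′]⊗[1/b_{s−j−1}′]⊗⋯⊗[1/b₁′] with b′ = b+2 for letters 1 ≤ b ≤ n−2 and b′ = (c+2)‾ for b = c̄, intertwines the crystal operators: i_s(ẽ₁^A T, T′) = ẽ₁ i_s(T,T′), i_s(f̃₁^A T, T′) = f̃₁ i_s(T,T′), and i_s(T, ẽ_i^D T′) = ẽ_{i+2} i_s(T,T′), i_s(T, f̃_i^D T′) = f̃_{i+2} i_s(T,T′) for 1 ≤ i ≤ n−2. -/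
open scoped Classical

/-- The weakly increasing row word `1^{x₁} 2^{x₂} ⋯ M^{x_M} M̄^{x̄_M} ⋯ 1̄^{x̄₁}` of an
element of the one-row crystal `B^{1,s}` (alphabet of size `M = m+4`). -/
noncomputable def rowWordD (m : ℕ) (v : DV m) : List ℤ :=
  ((List.finRange (m + 4)).flatMap
      (fun j => List.replicate (v.1 j).toNat ((j.val : ℤ) + 1))) ++
  ((List.finRange (m + 4)).reverse.flatMap
      (fun j => List.replicate (v.2 j).toNat (-((j.val : ℤ) + 1))))

/-- The shift of the `D_{n−2}` alphabet into `𝓑 ∖ {1,2,2̄,1̄}`: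
`b ↦ b+2` and `c̄ ↦ (c+2)‾`. -/
noncomputable def shift2 (b : ℤ) : ℤ := if 0 < b then b + 2 else b - 2

/-- The flattened reading word of `i_s((j, s−j), b)`: the element
`[2/b_s′] ⊗ ⋯ ⊗ [2/b_{s−j}′] ⊗ [1/b_{s−j−1}′] ⊗ ⋯ ⊗ [1/b₁′]` of `(B^{2,1})^{⊗s}`. -/
noncomputable def isFlat (m s : ℕ) (j : ℕ) (v : DV m) : List ℤ :=
  (((List.replicate (s - j) (2 : ℤ) ++ List.replicate j (1 : ℤ)).zip
      (((rowWordD m v).map shift2).reverse)).map (fun p => [p.1, p.2])).flatten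

/-
The operator `ẽ_i` on a word obeys the tensor product rule for concatenation, which the
string-length function `wPhi` controls.  A word in letters on which both `ẽ_i` and `f̃_i` vanish is
invisible to this rule, so `ẽ_i` acts on each row of the interleaved image separately: only `i = 1`
sees the row of `1`s and `2`s, and only `i ≥ 3` sees the other one.

Reversing a word and barring its letters exchanges `ẽ` and `f̃`, as does exchanging `x` and `x̄` in
the coordinates; the automorphism `r ↔ r̄` of `D_r`, `r = n - 2`, exchanges the nodes `r - 1` and
`r`.  This leaves `ẽ_i` on `B^{1,s}` for `i < r`, where the second row is the barred letters
followed by the unbarred ones, and each half meets the string of `ẽ_{i+2}` in two adjacent blocks.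
The comparison of `φ` with `ε` made by the tensor product rule at the junction is then the
comparison of `x̄_{i+1}` with `x_{i+1}` in the coordinate formula.
-/

namespace LetterOps

variable {L L' : Type}

/-- The seminormality axioms of a crystal, as far as the signature rule needs them. -/
structure IsSeminormal (A : LetterOps L) : Prop where
  eps_nonneg : ∀ b, 0 ≤ A.eps b
  phi_nonneg : ∀ b, 0 ≤ A.phi b
  e_eq_none : ∀ b, A.eps b = 0 → A.e b = none
  f_eq_none : ∀ b, A.phi b = 0 → A.f b = none

/-- A letter that is alone in its `i`-string, hence invisible to the signature rule. -/
structure IsNeutral (A : LetterOps L) (b : L) : Prop where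
  eps : A.eps b = 0
  phi : A.phi b = 0

/-- An `i`-string of length one, with lower end `α` and upper end `β = ẽ α`. -/
structure IsArrow (A : LetterOps L) (α β : L) : Prop where
  e : A.e α = some β
  eps_left : A.eps α = 1
  phi_left : A.phi α = 0
  eps_right : A.eps β = 0
  phi_right : A.phi β = 1

/-- The part of a strict crystal morphism that concerns `ẽ`. -/
structure IsRaisingHom (A : LetterOps L) (B : LetterOps L') (σ : L → L') : Prop where
  e : ∀ b, B.e (σ b) = (A.e b).map σ
  eps : ∀ b, B.eps (σ b) = A.eps b
  phi : ∀ b, B.phi (σ b) = A.phi b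

/-- The contragredient crystal: all arrows are reversed. -/
def dual (A : LetterOps L) : LetterOps L := ⟨A.f, A.e, A.phi, A.eps⟩

theorem IsSeminormal.dual {A : LetterOps L} (hA : A.IsSeminormal) : A.dual.IsSeminormal :=
  ⟨hA.phi_nonneg, hA.eps_nonneg, hA.f_eq_none, hA.e_eq_none⟩

end LetterOps

section SignatureRule

variable {L L' : Type} {A : LetterOps L}

theorem wEps_nonneg (hA : A.IsSeminormal) : ∀ w : List L, 0 ≤ wEps A w
  | [] => le_rfl
  | b :: _ => (hA.eps_nonneg b).trans (le_max_left _ _)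

theorem wPhi_nonneg (A : LetterOps L) : ∀ w : List L, 0 ≤ wPhi A w
  | [] => le_rfl
  | _ :: w => (wPhi_nonneg A w).trans (le_max_left _ _)

theorem wE_eq_none_of_wEps_eq_zero (hA : A.IsSeminormal) {w : List L} (hw : wEps A w = 0) :
    wE A w = none := by
  cases w with
  | nil => rfl
  | cons b w =>
    have hb := hA.eps_nonneg b
    simp only [wEps] at hw
    rw [wE, if_pos (by omega), hA.e_eq_none b (by omega), Option.map_none]

theorem wEps_append (hA : A.IsSeminormal) (u w : List L) :
    wEps A (u ++ w) = max (wEps A u) (wEps A w - (wPhi A u - wEps A u)) := by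
  induction u with
  | nil => simp [wEps, wPhi, wEps_nonneg hA w]
  | cons b u ih => simp only [List.cons_append, wEps, wPhi, ih]; omega

theorem wPhi_append (hA : A.IsSeminormal) (u w : List L) :
    wPhi A (u ++ w) = max (wPhi A w) (wPhi A u + (wPhi A w - wEps A w)) := by
  induction u with
  | nil => simp [wPhi, wEps_nonneg hA w]
  | cons b u ih => simp only [List.cons_append, wPhi, ih, wEps_append hA]; omega

theorem wE_append (hA : A.IsSeminormal) (u w : List L) :
    wE A (u ++ w) =
      if wEps A w ≤ wPhi A u then (wE A u).map (· ++ w) else (wE A w).map (u ++ ·) := by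
  induction u with
  | nil =>
    split_ifs with h
    · rw [List.nil_append, wE_eq_none_of_wEps_eq_zero hA (h.antisymm (wEps_nonneg hA w))]; rfl
    · simp
  | cons b u ih =>
    simp only [List.cons_append, wE, wPhi, wEps_append hA, ih, apply_ite (Option.map _)]
    split_ifs <;> first | omega | simp [Function.comp_def]

theorem wEps_wPhi_dual_reverse (hA : A.IsSeminormal) (w : List L) :
    wEps A.dual w.reverse = wPhi A w ∧ wPhi A.dual w.reverse = wEps A w := by
  induction w with
  | nil => exact ⟨rfl, rfl⟩
  | cons b w ih =>
    have hε := hA.eps_nonneg b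
    simp only [List.reverse_cons, wEps_append hA.dual, wPhi_append hA.dual, ih, wEps, wPhi]
    simp only [LetterOps.dual]
    omega

theorem wF_eq_wE_dual (hA : A.IsSeminormal) (w : List L) :
    wF A w = (wE A.dual w.reverse).map List.reverse := by
  induction w with
  | nil => rfl
  | cons b w ih =>
    have hb : wEps A.dual [b] = A.phi b := by
      have := hA.eps_nonneg b
      simp only [wEps, LetterOps.dual]; omega
    have he : wE A.dual [b] = (A.f b).map ([·]) := by
      rw [wE, if_pos (by exact hA.eps_nonneg b)]; rfl
    rw [List.reverse_cons, wE_append hA.dual, hb, he, (wEps_wPhi_dual_reverse hA w).2, wF, ih]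
    split_ifs <;> first | omega | simp [Function.comp_def]

theorem wEps_map {B : LetterOps L'} {σ : L → L'} (hσ : A.IsRaisingHom B σ) (w : List L) :
    wEps B (w.map σ) = wEps A w := by
  induction w with
  | nil => rfl
  | cons b w ih => simp only [List.map_cons, wEps, hσ.eps, hσ.phi, ih]

theorem wE_map {B : LetterOps L'} {σ : L → L'} (hσ : A.IsRaisingHom B σ) (w : List L) :
    wE B (w.map σ) = (wE A w).map (List.map σ) := by
  induction w with
  | nil => rfl
  | cons b w ih =>
    simp only [List.map_cons, wE, wEps_map hσ, hσ.phi, hσ.e, ih]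
    split_ifs <;> simp [Function.comp_def]

theorem wF_eq_wE_of_dual (hA : A.IsSeminormal) {σ : L → L} (hσ : A.dual.IsRaisingHom A σ)
    (hinv : Function.Involutive σ) (w : List L) :
    wF A w = (wE A (w.map σ).reverse).map fun u => (u.map σ).reverse := by
  rw [wF_eq_wE_dual hA, ← List.map_reverse, wE_map hσ, Option.map_map]
  simp [Function.comp_def, hinv _]

end SignatureRule

section NeutralLetters

variable {L : Type} {A : LetterOps L}

theorem wEps_wPhi_eq_zero_of_neutral {w : List L} (hw : ∀ b ∈ w, A.IsNeutral b) :
    wEps A w = 0 ∧ wPhi A w = 0 := by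
  induction w with
  | nil => exact ⟨rfl, rfl⟩
  | cons b w ih =>
    obtain ⟨hb, hw⟩ := List.forall_mem_cons.1 hw
    simp [wEps, wPhi, ih hw, hb.eps, hb.phi]

theorem wE_neutral_append (hA : A.IsSeminormal) {u : List L} (hu : ∀ b ∈ u, A.IsNeutral b)
    (w : List L) : wE A (u ++ w) = (wE A w).map (u ++ ·) := by
  obtain ⟨hε, hφ⟩ := wEps_wPhi_eq_zero_of_neutral hu
  rw [wE_append hA, hφ]
  split_ifs with h
  · rw [wE_eq_none_of_wEps_eq_zero hA hε,
      wE_eq_none_of_wEps_eq_zero hA (h.antisymm (wEps_nonneg hA w))]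
    rfl
  · rfl

theorem wE_append_neutral (hA : A.IsSeminormal) {u : List L} (hu : ∀ b ∈ u, A.IsNeutral b)
    (w : List L) : wE A (w ++ u) = (wE A w).map (· ++ u) := by
  rw [wE_append hA, (wEps_wPhi_eq_zero_of_neutral hu).1, if_pos (wPhi_nonneg A w)]

theorem wEps_cons_neutral (hA : A.IsSeminormal) {b : L} (hb : A.IsNeutral b) (w : List L) :
    wEps A (b :: w) = wEps A w := by
  simp [wEps, hb.eps, hb.phi, wEps_nonneg hA w]

theorem wE_cons_neutral (hA : A.IsSeminormal) {b : L} (hb : A.IsNeutral b) (w : List L) :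
    wE A (b :: w) = (wE A w).map (b :: ·) :=
  wE_neutral_append hA (u := [b]) (by simpa using hb) w

theorem wF_cons_neutral (hA : A.IsSeminormal) {b : L} (hb : A.IsNeutral b) (w : List L) :
    wF A (b :: w) = (wF A w).map (b :: ·) := by
  rw [wF, hb.phi, if_neg (wEps_nonneg hA w).not_gt]

/-- The reading word of the sequence of columns `[c₁/d₁] ⊗ [c₂/d₂] ⊗ ⋯`. -/
def interleave (cs ds : List L) : List L := ((cs.zip ds).map fun p => [p.1, p.2]).flatten

theorem interleave_cons_cons (c d : L) (cs ds : List L) :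
    interleave (c :: cs) (d :: ds) = c :: d :: interleave cs ds := rfl

theorem wEps_wE_wF_interleave_of_neutral_right (hA : A.IsSeminormal) {cs ds : List L}
    (hlen : cs.length ≤ ds.length) (hds : ∀ d ∈ ds, A.IsNeutral d) :
    wEps A (interleave cs ds) = wEps A cs ∧
      wE A (interleave cs ds) = (wE A cs).map (interleave · ds) ∧
      wF A (interleave cs ds) = (wF A cs).map (interleave · ds) := by
  induction cs generalizing ds with
  | nil => exact ⟨rfl, rfl, rfl⟩
  | cons c cs ih =>
    obtain _ | ⟨d, ds⟩ := ds
    · simp at hlen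
    obtain ⟨hd, hds⟩ := List.forall_mem_cons.1 hds
    obtain ⟨hε, hE, hF⟩ := ih (by simpa using hlen) hds
    rw [interleave_cons_cons, wEps, wE, wF, wEps_cons_neutral hA hd, wE_cons_neutral hA hd,
      wF_cons_neutral hA hd, hε, hE, hF, wEps, wE, wF]
    refine ⟨rfl, ?_, ?_⟩ <;> split_ifs <;> simp [Function.comp_def, interleave_cons_cons]

theorem wEps_wE_wF_interleave_of_neutral_left (hA : A.IsSeminormal) {cs ds : List L}
    (hlen : ds.length ≤ cs.length) (hcs : ∀ c ∈ cs, A.IsNeutral c) :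
    wEps A (interleave cs ds) = wEps A ds ∧
      wE A (interleave cs ds) = (wE A ds).map (interleave cs) ∧
      wF A (interleave cs ds) = (wF A ds).map (interleave cs) := by
  induction ds generalizing cs with
  | nil => simp [interleave, wEps, wE, wF]
  | cons d ds ih =>
    obtain _ | ⟨c, cs⟩ := cs
    · simp at hlen
    obtain ⟨hc, hcs⟩ := List.forall_mem_cons.1 hcs
    obtain ⟨hε, hE, hF⟩ := ih (by simpa using hlen) hcs
    rw [interleave_cons_cons, wEps_cons_neutral hA hc, wE_cons_neutral hA hc,
      wF_cons_neutral hA hc, wEps, wE, wF, hε, hE, hF, wEps, wE, wF]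
    refine ⟨rfl, ?_, ?_⟩ <;> split_ifs <;> simp [Function.comp_def, interleave_cons_cons]

end NeutralLetters

section ArrowWords

variable {L : Type} {A : LetterOps L} {α β : L}

theorem wEps_wPhi_replicate_append_replicate (h : A.IsArrow α β) (a b : ℕ) :
    wEps A (List.replicate a α ++ List.replicate b β) = a ∧
      wPhi A (List.replicate a α ++ List.replicate b β) = b := by
  have hβ : wEps A (List.replicate b β) = 0 ∧ wPhi A (List.replicate b β) = b := by
    induction b with
    | zero => exact ⟨rfl, rfl⟩
    | succ b ih =>
      simp only [List.replicate_succ, wEps, wPhi, ih, h.eps_right, h.phi_right]; omega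
  induction a with
  | zero => simpa using hβ
  | succ a ih =>
    simp only [List.replicate_succ, List.cons_append, wEps, wPhi, ih, h.eps_left, h.phi_left]
    omega

theorem wE_replicate_append_replicate (hA : A.IsSeminormal) (h : A.IsArrow α β) (a b : ℕ) :
    wE A (List.replicate a α ++ List.replicate b β) =
      if 0 < a then some (List.replicate (a - 1) α ++ List.replicate (b + 1) β) else none := by
  induction a with
  | zero => exact wE_eq_none_of_wEps_eq_zero hA (wEps_wPhi_replicate_append_replicate h 0 b).1
  | succ a ih =>
    rw [List.replicate_succ, List.cons_append, wE, (wEps_wPhi_replicate_append_replicate h a b).1,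
      h.phi_left, h.e, ih, if_pos a.succ_pos]
    obtain _ | a := a <;> simp [List.replicate_succ]

variable {ι : Type}

/-- The word listing, for `j` running through `l`, the letter `c j` with multiplicity `x j`. -/
def contentWord (c : ι → L) (x : ι → ℤ) (l : List ι) : List L :=
  l.flatMap fun j => List.replicate (x j).toNat (c j)

theorem map_contentWord {L' : Type} (σ : L → L') (c : ι → L) (x : ι → ℤ) (l : List ι) :
    (contentWord c x l).map σ = contentWord (σ ∘ c) x l := by
  simp [contentWord, List.map_flatMap]

theorem reverse_contentWord (c : ι → L) (x : ι → ℤ) (l : List ι) :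
    (contentWord c x l).reverse = contentWord c x l.reverse := by
  simp [contentWord, List.reverse_flatMap, Function.comp_def]

theorem mem_of_mem_contentWord {c : ι → L} {x : ι → ℤ} {l : List ι} {b : L}
    (hb : b ∈ contentWord c x l) : ∃ j ∈ l, c j = b := by
  obtain ⟨j, hj, hb⟩ := List.mem_flatMap.1 hb
  exact ⟨j, hj, (List.eq_of_mem_replicate hb).symm⟩

theorem contentWord_congr {c c' : ι → L} {x x' : ι → ℤ} {l : List ι} (hc : ∀ j ∈ l, c j = c' j)
    (hx : ∀ j ∈ l, x j = x' j) : contentWord c x l = contentWord c' x' l :=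
  List.flatMap_congr fun j hj => by rw [hc j hj, hx j hj]

theorem contentWord_append_cons_cons (c : ι → L) (x : ι → ℤ) (l r : List ι) (p q : ι) :
    contentWord c x (l ++ p :: q :: r) = contentWord c x l ++
      ((List.replicate (x p).toNat (c p) ++ List.replicate (x q).toNat (c q)) ++
        contentWord c x r) := by
  simp [contentWord]

theorem isNeutral_of_mem_contentWord {c : ι → L} {x : ι → ℤ} {l : List ι}
    (hl : ∀ j ∈ l, A.IsNeutral (c j)) : ∀ b ∈ contentWord c x l, A.IsNeutral b := by
  intro b hb
  obtain ⟨j, hj, rfl⟩ := mem_of_mem_contentWord hb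
  exact hl j hj

theorem wEps_wPhi_contentWord (hA : A.IsSeminormal) {c : ι → L} {p q : ι} {l r : List ι}
    (h : A.IsArrow (c p) (c q)) (hl : ∀ j ∈ l, A.IsNeutral (c j))
    (hr : ∀ j ∈ r, A.IsNeutral (c j)) (x : ι → ℤ) :
    wEps A (contentWord c x (l ++ p :: q :: r)) = (x p).toNat ∧
      wPhi A (contentWord c x (l ++ p :: q :: r)) = (x q).toNat := by
  have hL := wEps_wPhi_eq_zero_of_neutral (isNeutral_of_mem_contentWord (x := x) hl)
  have hR := wEps_wPhi_eq_zero_of_neutral (isNeutral_of_mem_contentWord (x := x) hr)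
  have hpq := wEps_wPhi_replicate_append_replicate h (x p).toNat (x q).toNat
  simp only [contentWord_append_cons_cons, wEps_append hA _ (_ ++ contentWord c x r),
    wPhi_append hA _ (_ ++ contentWord c x r), wEps_append hA _ (contentWord c x r),
    wPhi_append hA _ (contentWord c x r), hL, hR, hpq]
  omega

theorem wE_contentWord (hA : A.IsSeminormal) {c : ι → L} {p q : ι} {l r : List ι}
    (h : A.IsArrow (c p) (c q)) (hl : ∀ j ∈ l, A.IsNeutral (c j))
    (hr : ∀ j ∈ r, A.IsNeutral (c j)) {x y : ι → ℤ} (hx : 0 ≤ x q) (hp : y p = x p - 1)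
    (hq : y q = x q + 1) (hxy : ∀ j, j ≠ p → j ≠ q → y j = x j) :
    wE A (contentWord c x (l ++ p :: q :: r)) =
      if 0 < x p then some (contentWord c y (l ++ p :: q :: r)) else none := by
  have hne {j : ι} (hj : A.IsNeutral (c j)) : j ≠ p ∧ j ≠ q := by
    refine ⟨?_, ?_⟩ <;> rintro rfl
    · exact absurd (hj.eps.symm.trans h.eps_left) zero_ne_one
    · exact absurd (hj.phi.symm.trans h.phi_right) zero_ne_one
  have hcongr {k : List ι} (hk : ∀ j ∈ k, A.IsNeutral (c j)) :
      contentWord c y k = contentWord c x k :=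
    contentWord_congr (fun _ _ => rfl) fun j hj => hxy j (hne (hk j hj)).1 (hne (hk j hj)).2
  simp only [contentWord_append_cons_cons, hcongr hl, hcongr hr, hp, hq,
    wE_neutral_append hA (isNeutral_of_mem_contentWord hl),
    wE_append_neutral hA (isNeutral_of_mem_contentWord hr), wE_replicate_append_replicate hA h,
    Int.lt_toNat, Int.toNat_add hx zero_le_one]
  split_ifs <;> simp_all

end ArrowWords

section LettersD

theorem isSeminormal_DLet (n i : ℕ) : (DLet n i).IsSeminormal := by
  constructor <;> intro b <;> simp only [DLet] <;> split_ifs <;> simp_all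

theorem isNeutral_DLet_of_ne {n i : ℕ} (hi : i < n) {b : ℤ} (h : b.natAbs ≠ i)
    (h' : b.natAbs ≠ i + 1) : (DLet n i).IsNeutral b := by
  constructor <;> simp only [DLet, if_pos hi] <;> rw [if_neg] <;> omega

theorem isNeutral_DLet_of_natAbs_lt {n i : ℕ} {b : ℤ} (hi : b.natAbs < i)
    (hn : b.natAbs + 1 < n) : (DLet n i).IsNeutral b := by
  constructor <;> simp only [DLet] <;> split_ifs <;> omega

theorem isArrow_DLet {n i : ℕ} (hi : i < n) (h0 : 0 < i) : (DLet n i).IsArrow (i + 1) i := by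
  constructor <;> simp only [DLet, if_pos hi] <;> grind

theorem isArrow_DLet_neg {n i : ℕ} (hi : i < n) (h0 : 0 < i) :
    (DLet n i).IsArrow (-i) (-(i + 1)) := by
  constructor <;> simp only [DLet, if_pos hi] <;> grind

theorem isArrow_dual_DLet {n i : ℕ} (hi : i < n) (h0 : 0 < i) :
    (DLet n i).dual.IsArrow i (i + 1) := by
  constructor <;> simp only [DLet, LetterOps.dual, if_pos hi] <;> grind

theorem isRaisingHom_neg (n i : ℕ) : (DLet n i).dual.IsRaisingHom (DLet n i) (- ·) := by
  constructor <;> intro b <;> simp only [DLet, LetterOps.dual] <;> grind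

/-- The Dynkin diagram automorphism exchanging the nodes `n - 1` and `n`. -/
theorem isRaisingHom_swap {n : ℕ} (hn : 2 ≤ n) :
    (DLet n (n - 1)).IsRaisingHom (DLet n n) (Equiv.swap (n : ℤ) (-n)) := by
  constructor <;> intro b <;> simp only [DLet, Equiv.swap_apply_def] <;> grind

end LettersD

section RowCrystal

variable {m s : ℕ} {v : DV m}

theorem bump_apply (x : Fin (m + 4) → ℤ) (j k : Fin (m + 4)) (d : ℤ) :
    bump x j d k = x k + if k = j then d else 0 := by
  unfold bump
  split_ifs with h
  · rw [h, Function.update_self]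
  · rw [Function.update_of_ne h, add_zero]

theorem bump_comm (x : Fin (m + 4) → ℤ) (j k : Fin (m + 4)) (d e : ℤ) :
    bump (bump x j d) k e = bump (bump x k e) j d := by
  funext i
  simp only [bump_apply]
  ring

theorem sum_bump (x : Fin (m + 4) → ℤ) (j : Fin (m + 4)) (d : ℤ) :
    ∑ k, bump x j d k = ∑ k, x k + d := by
  simp [bump_apply, Finset.sum_add_distrib]

theorem DMem.swap (hv : DMem m s v) : DMem m s v.swap :=
  ⟨hv.2.1, hv.1, (add_comm _ _).trans hv.2.2.1, hv.2.2.2.symm⟩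

theorem dMem_swap_iff : DMem m s v.swap ↔ DMem m s v :=
  ⟨fun h => by simpa using h.swap, DMem.swap⟩

theorem dMem_bump_bump_iff (hv : DMem m s v) {p q : Fin (m + 4)} (hpq : p ≠ q)
    (hq : q = Fin.last (m + 3) → v.2 q = 0) :
    DMem m s (bump (bump v.1 q 1) p (-1), v.2) ↔ 0 < v.1 p := by
  obtain ⟨h₁, h₂, hsum, hlast⟩ := hv
  change v.1 (Fin.last (m + 3)) = 0 ∨ v.2 (Fin.last (m + 3)) = 0 at hlast
  constructor
  · rintro ⟨h, -⟩
    have := h p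
    simp only [bump_apply, if_pos, if_neg hpq] at this
    omega
  · intro hp
    refine ⟨fun j => ?_, h₂, by simpa [sum_bump] using hsum, ?_⟩
    · have := h₁ j
      simp only [bump_apply]
      grind
    · change bump (bump v.1 q 1) p (-1) (Fin.last (m + 3)) = 0 ∨ v.2 (Fin.last (m + 3)) = 0
      simp only [bump_apply]
      grind

theorem fRaw_eq_swap_eRaw_swap (hv : DMem m s v) (i : ℕ) :
    fRaw m i v = (eRaw m i v.swap).swap := by
  have hM := hv.1 ⟨m + 3, by omega⟩
  simp only [fRaw, eRaw, Prod.fst_swap, Prod.snd_swap]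
  split_ifs <;> first | rfl | omega | (rw [bump_comm]; rfl)

theorem fD_eq_eD_swap (hv : DMem m s v) (i : ℕ) :
    fD m s i v = (eD m s i v.swap).map Prod.swap := by
  simp only [fD, eD, fRaw_eq_swap_eRaw_swap hv, dMem_swap_iff]
  split_ifs <;> rfl

theorem eD_add_one (hv : DMem m s v) {k : ℕ} (hk : k + 1 < m + 4) :
    eD m s (k + 1) v =
      if v.2 ⟨k + 1, hk⟩ < v.1 ⟨k + 1, hk⟩ then
        some (bump (bump v.1 ⟨k, by omega⟩ 1) ⟨k + 1, hk⟩ (-1), v.2)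
      else if 0 < v.2 ⟨k, by omega⟩ then
        some (v.1, bump (bump v.2 ⟨k + 1, hk⟩ 1) ⟨k, by omega⟩ (-1))
      else none := by
  have h₂ := hv.2.1 ⟨k + 1, hk⟩
  have hne : (⟨k, by omega⟩ : Fin (m + 4)) ≠ ⟨k + 1, hk⟩ := by simp
  rw [eD, eRaw, if_neg k.succ_ne_zero, dif_pos (by omega)]
  simp only [Nat.add_sub_cancel]
  by_cases hlt : v.2 ⟨k + 1, hk⟩ < v.1 ⟨k + 1, hk⟩
  · have hlast : (⟨k, by omega⟩ : Fin (m + 4)) = Fin.last (m + 3) → v.2 ⟨k, by omega⟩ = 0 := by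
      grind
    rw [if_pos hlt, if_pos hlt, if_pos ((dMem_bump_bump_iff hv hne.symm hlast).2 (by omega))]
  · have hlast : (⟨k + 1, hk⟩ : Fin (m + 4)) = Fin.last (m + 3) → v.1 ⟨k + 1, hk⟩ = 0 := by
      intro h
      have h₁ := hv.1 ⟨k + 1, hk⟩
      have h₀ := hv.2.2.2
      grind
    rw [if_neg hlt, if_neg hlt]
    exact if_congr (dMem_swap_iff.symm.trans (dMem_bump_bump_iff hv.swap hne hlast)) rfl rfl

/-- The Dynkin diagram automorphism exchanging the nodes `M - 1` and `M` (`M = m + 4`) acts on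
`B^{1,s}` by exchanging `x_M` and `x̄_M`. -/
def flipLast (v : DV m) : DV m :=
  (Function.update v.1 (Fin.last (m + 3)) (v.2 (Fin.last (m + 3))),
    Function.update v.2 (Fin.last (m + 3)) (v.1 (Fin.last (m + 3))))

theorem flipLast_flipLast (v : DV m) : flipLast (flipLast v) = v := by
  simp [flipLast]

theorem dMem_flipLast (hv : DMem m s v) : DMem m s (flipLast v) := by
  obtain ⟨h₁, h₂, hsum, hlast⟩ := hv
  have hM : (⟨m + 3, by omega⟩ : Fin (m + 4)) = Fin.last (m + 3) := rfl
  refine ⟨?_, ?_, ?_, ?_⟩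
  · intro j; simp only [flipLast, Function.update_apply]; split_ifs <;> simp [h₁, h₂]
  · intro j; simp only [flipLast, Function.update_apply]; split_ifs <;> simp [h₁, h₂]
  · simp only [Fin.sum_univ_castSucc] at hsum ⊢
    simp only [flipLast, ne_eq, Fin.castSucc_ne_last, not_false_eq_true, Function.update_of_ne,
      Function.update_self]
    omega
  · simpa [flipLast, hM] using hlast.symm

theorem dMem_flipLast_iff : DMem m s (flipLast v) ↔ DMem m s v :=
  ⟨fun h => flipLast_flipLast v ▸ dMem_flipLast h, dMem_flipLast⟩

theorem eRaw_last_eq_flipLast (hv : DMem m s v) :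
    eRaw m (m + 4) v = flipLast (eRaw m (m + 3) (flipLast v)) := by
  obtain ⟨h₁, h₂, -, hlast⟩ := hv
  have hcond : v.1 (Fin.last (m + 3)) < v.2 (Fin.last (m + 3)) ↔
      ¬ v.2 (Fin.last (m + 3)) = 0 := by
    have h₁ := h₁ (Fin.last (m + 3))
    have h₂ := h₂ (Fin.last (m + 3))
    change v.1 (Fin.last (m + 3)) = 0 ∨ v.2 (Fin.last (m + 3)) = 0 at hlast
    omega
  have hM : (⟨m + 3, by omega⟩ : Fin (m + 4)) = Fin.last (m + 3) := rfl
  have hne : (⟨m + 2, by omega⟩ : Fin (m + 4)) ≠ Fin.last (m + 3) := by simp [Fin.ext_iff]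
  simp only [eRaw, hM, flipLast, Function.update_self, hcond]
  by_cases h : v.2 (Fin.last (m + 3)) = 0 <;>
    simp only [h, Nat.add_eq_zero_iff, OfNat.ofNat_ne_zero, and_false, ↓reduceIte,
      add_le_add_iff_left, Nat.reduceLeDiff, ↓reduceDIte, Int.reduceNeg, Std.le_refl,
      not_true_eq_false, not_false_eq_true, Nat.add_one_sub_one, bump_apply,
      Function.update_self, Function.update_idem, Prod.ext_iff, funext_iff,
      Function.update_apply] <;>
    grind

theorem eD_last_eq_flipLast (hv : DMem m s v) :
    eD m s (m + 4) v = (eD m s (m + 3) (flipLast v)).map flipLast := by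
  simp only [eD, eRaw_last_eq_flipLast hv, dMem_flipLast_iff]
  split_ifs <;> rfl

end RowCrystal

section FirstRow

/-- The word `2^{s-j} 1^j` of the first factor `(j, s - j)` of `i_s`. -/
def firstRow (s j : ℕ) : List ℤ := List.replicate (s - j) 2 ++ List.replicate j 1

theorem length_firstRow {s j : ℕ} (hj : j ≤ s) : (firstRow s j).length = s := by
  simp [firstRow, hj]

theorem eq_two_or_eq_one_of_mem_firstRow {s j : ℕ} {c : ℤ} (hc : c ∈ firstRow s j) :
    c = 2 ∨ c = 1 :=
  (List.mem_append.1 hc).imp List.eq_of_mem_replicate List.eq_of_mem_replicate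

theorem wE_firstRow {n : ℕ} (hn : 1 < n) (s j : ℕ) :
    wE (DLet n 1) (firstRow s j) = if j < s then some (firstRow s (j + 1)) else none := by
  have harrow : (DLet n 1).IsArrow 2 1 := isArrow_DLet hn one_pos
  simp only [firstRow, wE_replicate_append_replicate (isSeminormal_DLet n 1) harrow,
    Nat.sub_pos_iff_lt, Nat.sub_sub]

theorem wF_firstRow {n : ℕ} (hn : 1 < n) {s j : ℕ} (hj : j ≤ s) :
    wF (DLet n 1) (firstRow s j) = if 0 < j then some (firstRow s (j - 1)) else none := by
  have harrow : (DLet n 1).dual.IsArrow 1 2 := isArrow_dual_DLet hn one_pos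
  rw [wF_eq_wE_dual (isSeminormal_DLet n 1), firstRow, List.reverse_append,
    List.reverse_replicate, List.reverse_replicate,
    wE_replicate_append_replicate (isSeminormal_DLet n 1).dual harrow]
  split_ifs with h
  · rw [Option.map_some, List.reverse_append, List.reverse_replicate, List.reverse_replicate,
      firstRow, show s - (j - 1) = s - j + 1 by omega]
  · rfl

end FirstRow

section RowWords

variable {m s : ℕ} {v : DV m}

/-- The unbarred letter `b′ = b + 2` for the letter `b = j + 1` counted by the `j`-th coordinate. -/
def shiftedLetter {d : ℕ} (j : Fin d) : ℤ := j + 3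

/-- The initial part of `b_s′ ⊗ ⋯ ⊗ b₁′`, made of its barred letters. -/
def barredHalf (x : Fin (m + 4) → ℤ) : List ℤ :=
  contentWord (fun j => -shiftedLetter j) x (List.finRange (m + 4))

/-- The final part of `b_s′ ⊗ ⋯ ⊗ b₁′`, made of its unbarred letters. -/
def unbarredHalf (x : Fin (m + 4) → ℤ) : List ℤ :=
  contentWord shiftedLetter x (List.finRange (m + 4)).reverse

/-- The word `b_s′ ⊗ ⋯ ⊗ b₁′` of the second factor of `i_s`. -/
def shiftedRow (v : DV m) : List ℤ := barredHalf v.2 ++ unbarredHalf v.1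

theorem isFlat_eq_interleave_comp (m s j : ℕ) :
    isFlat m s j = interleave (firstRow s j) ∘ shiftedRow := by
  funext v
  have hpos (j : Fin (m + 4)) : shift2 ((j : ℤ) + 1) = shiftedLetter j := by
    grind [shift2, shiftedLetter]
  have hneg (j : Fin (m + 4)) : shift2 (-((j : ℤ) + 1)) = -shiftedLetter j := by
    grind [shift2, shiftedLetter]
  have hrow : rowWordD m v =
      contentWord (fun j : Fin (m + 4) => (j : ℤ) + 1) v.1 (List.finRange (m + 4)) ++
        contentWord (fun j : Fin (m + 4) => -((j : ℤ) + 1)) v.2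
          (List.finRange (m + 4)).reverse := rfl
  rw [isFlat, hrow, List.map_append, List.reverse_append, map_contentWord, map_contentWord,
    reverse_contentWord, reverse_contentWord, List.reverse_reverse]
  simp only [Function.comp_def, hpos, hneg]
  rfl

theorem length_contentWord_finRange {L : Type} {n : ℕ} (c : Fin n → L) {x : Fin n → ℤ}
    (hx : ∀ j, 0 ≤ x j) : ((contentWord c x (List.finRange n)).length : ℤ) = ∑ j, x j := by
  simp only [contentWord, List.length_flatMap, List.length_replicate]
  rw [← List.ofFn_eq_map, List.sum_ofFn]
  push_cast
  exact Finset.sum_congr rfl fun j _ => Int.toNat_of_nonneg (hx j)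

theorem length_shiftedRow (hv : DMem m s v) : (shiftedRow v).length = s := by
  have h₁ := length_contentWord_finRange (shiftedLetter (d := m + 4)) hv.1
  have h₂ := length_contentWord_finRange (fun j : Fin (m + 4) => -shiftedLetter j) hv.2.1
  have hsum : ∑ j, v.1 j + ∑ j, v.2 j = (s : ℤ) := hv.2.2.1
  rw [← Nat.cast_inj (R := ℤ), shiftedRow, barredHalf, unbarredHalf, List.length_append,
    ← reverse_contentWord _ v.1, List.length_reverse, Nat.cast_add, h₁, h₂, add_comm, hsum]

theorem two_lt_natAbs_of_mem_shiftedRow {b : ℤ} (hb : b ∈ shiftedRow v) : 2 < b.natAbs := by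
  rcases List.mem_append.1 hb with hb | hb <;>
    obtain ⟨j, -, rfl⟩ := mem_of_mem_contentWord hb <;> simp only [shiftedLetter] <;> omega

theorem shiftedRow_swap (v : DV m) :
    shiftedRow v.swap = ((shiftedRow v).map (- ·)).reverse := by
  simp [shiftedRow, barredHalf, unbarredHalf, map_contentWord, reverse_contentWord,
    Function.comp_def]

theorem exists_shiftedRow_eq_append (m : ℕ) :
    ∃ l : List (Fin (m + 4)), (∀ j ∈ l, j.val < m + 3) ∧ ∀ v : DV m,
    shiftedRow v = contentWord (fun j => -shiftedLetter j) v.2 l ++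
      ((List.replicate (v.2 (Fin.last (m + 3))).toNat (-((m + 6 : ℕ) : ℤ)) ++
        List.replicate (v.1 (Fin.last (m + 3))).toNat ((m + 6 : ℕ) : ℤ)) ++
          contentWord shiftedLetter v.1 l.reverse) := by
  have hletter : shiftedLetter (Fin.last (m + 3)) = ((m + 6 : ℕ) : ℤ) := by
    simp only [shiftedLetter, Fin.val_last]; omega
  refine ⟨(List.finRange (m + 3)).map Fin.castSucc, by simp, fun v => ?_⟩
  rw [shiftedRow, barredHalf, unbarredHalf, List.finRange_succ_last, List.reverse_concat]
  simp [contentWord, hletter]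

theorem shiftedRow_flipLast (hv : DMem m s v) :
    shiftedRow (flipLast v) =
      (shiftedRow v).map (Equiv.swap ((m + 6 : ℕ) : ℤ) (-(m + 6 : ℕ))) := by
  obtain ⟨l, hl, hrow⟩ := exists_shiftedRow_eq_append m
  set σ := Equiv.swap ((m + 6 : ℕ) : ℤ) (-(m + 6 : ℕ))
  have hσ {j} (hj : j ∈ l) : σ (shiftedLetter j) = shiftedLetter j ∧
      σ (-shiftedLetter j) = -shiftedLetter j := by
    have := hl j hj
    constructor <;> apply Equiv.swap_apply_of_ne_of_ne <;> simp only [shiftedLetter] <;> omega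
  have hupdate {j} (hj : j ∈ l) (x : Fin (m + 4) → ℤ) (a : ℤ) :
      Function.update x (Fin.last (m + 3)) a j = x j :=
    Function.update_of_ne (Fin.ne_of_lt (hl j hj)) _ _
  have hbarred : contentWord (fun j => -shiftedLetter j) (flipLast v).2 l =
      contentWord (σ ∘ fun j => -shiftedLetter j) v.2 l :=
    contentWord_congr (fun j hj => (hσ hj).2.symm) fun j hj => hupdate hj _ _
  have hunbarred : contentWord shiftedLetter (flipLast v).1 l.reverse =
      contentWord (σ ∘ shiftedLetter) v.1 l.reverse :=
    contentWord_congr (fun j hj => (hσ (List.mem_reverse.1 hj)).1.symm)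
      fun j hj => hupdate (List.mem_reverse.1 hj) _ _
  have hlast : v.1 (Fin.last (m + 3)) = 0 ∨ v.2 (Fin.last (m + 3)) = 0 := hv.2.2.2
  simp only [hrow, hbarred, hunbarred, List.map_append, map_contentWord, List.map_replicate]
  rcases hlast with h | h <;> simp [flipLast, h, σ]

theorem exists_finRange_eq_append {n k : ℕ} (hk : k + 1 < n) :
    ∃ l r, List.finRange n = l ++ ⟨k, by omega⟩ :: ⟨k + 1, hk⟩ :: r ∧
      (∀ j ∈ l, j.val < k) ∧ ∀ j ∈ r, k + 1 < j.val := by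
  refine ⟨(List.finRange n).take k, (List.finRange n).drop (k + 2), ?_, ?_, ?_⟩
  · conv_lhs => rw [← List.take_append_drop k (List.finRange n)]
    rw [List.drop_eq_getElem_cons (by simp; omega), List.drop_eq_getElem_cons (by simp; omega)]
    simp
  · intro j hj
    obtain ⟨i, hi, rfl⟩ := List.mem_take_iff_getElem.1 hj
    simp only [List.length_finRange, lt_inf_iff, List.getElem_finRange, Fin.cast_mk] at hi ⊢
    omega
  · intro j hj
    obtain ⟨i, hi, rfl⟩ := List.mem_drop_iff_getElem.1 hj
    simp only [List.length_finRange, List.getElem_finRange, Fin.cast_mk] at hi ⊢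
    omega

theorem isArrow_shiftedLetter {n d k : ℕ} (hn : k + 3 < n) (hk : k + 1 < d) :
    (DLet n (k + 3)).IsArrow (shiftedLetter (⟨k + 1, hk⟩ : Fin d))
      (shiftedLetter (⟨k, by omega⟩ : Fin d)) := by
  convert isArrow_DLet hn (by omega) using 1 <;> simp only [shiftedLetter] <;> push_cast <;> ring

theorem isArrow_neg_shiftedLetter {n d k : ℕ} (hn : k + 3 < n) (hk : k + 1 < d) :
    (DLet n (k + 3)).IsArrow (-shiftedLetter (⟨k, by omega⟩ : Fin d))
      (-shiftedLetter (⟨k + 1, hk⟩ : Fin d)) := by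
  convert isArrow_DLet_neg hn (by omega) using 1 <;> simp only [shiftedLetter] <;> push_cast <;>
    ring

theorem isNeutral_shiftedLetter {n d k : ℕ} (hn : k + 3 < n) {j : Fin d}
    (hj : j.val < k ∨ k + 1 < j.val) :
    (DLet n (k + 3)).IsNeutral (shiftedLetter j) ∧
      (DLet n (k + 3)).IsNeutral (-shiftedLetter j) := by
  constructor <;> apply isNeutral_DLet_of_ne hn <;> simp only [shiftedLetter] <;> omega

theorem wE_contentWord_bump {L : Type} {A : LetterOps L} (hA : A.IsSeminormal)
    {c : Fin (m + 4) → L} {p q : Fin (m + 4)} {l r : List (Fin (m + 4))} (hpq : p ≠ q)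
    (h : A.IsArrow (c p) (c q)) (hl : ∀ j ∈ l, A.IsNeutral (c j))
    (hr : ∀ j ∈ r, A.IsNeutral (c j)) {x : Fin (m + 4) → ℤ} (hx : 0 ≤ x q) :
    wE A (contentWord c x (l ++ p :: q :: r)) =
      if 0 < x p then some (contentWord c (bump (bump x q 1) p (-1)) (l ++ p :: q :: r))
      else none := by
  apply wE_contentWord hA h hl hr hx <;> grind [bump_apply]

theorem wPhi_wE_barredHalf {x : Fin (m + 4) → ℤ} (hx : ∀ j, 0 ≤ x j) {n k : ℕ}
    (hn : k + 3 < n) (hk : k + 1 < m + 4) :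
    wPhi (DLet n (k + 3)) (barredHalf x) = x ⟨k + 1, hk⟩ ∧
      wE (DLet n (k + 3)) (barredHalf x) = if 0 < x ⟨k, by omega⟩ then
        some (barredHalf (bump (bump x ⟨k + 1, hk⟩ 1) ⟨k, by omega⟩ (-1))) else none := by
  obtain ⟨l, r, hlr, hl, hr⟩ := exists_finRange_eq_append hk
  have hA := isSeminormal_DLet n (k + 3)
  have hl (j) (hj : j ∈ l) := (isNeutral_shiftedLetter hn (.inl (hl j hj))).2
  have hr (j) (hj : j ∈ r) := (isNeutral_shiftedLetter hn (.inr (hr j hj))).2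
  have harrow := isArrow_neg_shiftedLetter hn hk
  simp only [barredHalf, hlr]
  exact ⟨(wEps_wPhi_contentWord hA (c := fun j => -shiftedLetter j) harrow hl hr x).2.trans
      (Int.toNat_of_nonneg (hx _)),
    wE_contentWord_bump hA (by simp) harrow hl hr (hx _)⟩

theorem wEps_wE_unbarredHalf {x : Fin (m + 4) → ℤ} (hx : ∀ j, 0 ≤ x j) {n k : ℕ}
    (hn : k + 3 < n) (hk : k + 1 < m + 4) :
    wEps (DLet n (k + 3)) (unbarredHalf x) = x ⟨k + 1, hk⟩ ∧
      wE (DLet n (k + 3)) (unbarredHalf x) = if 0 < x ⟨k + 1, hk⟩ then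
        some (unbarredHalf (bump (bump x ⟨k, by omega⟩ 1) ⟨k + 1, hk⟩ (-1))) else none := by
  obtain ⟨l, r, hlr, hl, hr⟩ := exists_finRange_eq_append hk
  have hrev : (List.finRange (m + 4)).reverse =
      r.reverse ++ ⟨k + 1, hk⟩ :: ⟨k, by omega⟩ :: l.reverse := by simp [hlr]
  have hA := isSeminormal_DLet n (k + 3)
  have hl (j) (hj : j ∈ l.reverse) :=
    (isNeutral_shiftedLetter hn (.inl (hl j (List.mem_reverse.1 hj)))).1
  have hr (j) (hj : j ∈ r.reverse) :=
    (isNeutral_shiftedLetter hn (.inr (hr j (List.mem_reverse.1 hj)))).1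
  have harrow := isArrow_shiftedLetter hn hk
  simp only [unbarredHalf, hrev]
  exact ⟨(wEps_wPhi_contentWord hA harrow hr hl x).1.trans (Int.toNat_of_nonneg (hx _)),
    wE_contentWord_bump hA (by simp) harrow hr hl (hx _)⟩

theorem wE_shiftedRow_of_lt (hv : DMem m s v) {k : ℕ} (hk : k + 1 < m + 4) :
    wE (DLet (m + 6) (k + 3)) (shiftedRow v) = (eD m s (k + 1) v).map shiftedRow := by
  obtain ⟨hφ, hEbarred⟩ := wPhi_wE_barredHalf hv.2.1 (n := m + 6) (by omega) hk
  obtain ⟨hε, hEunbarred⟩ := wEps_wE_unbarredHalf hv.1 (n := m + 6) (by omega) hk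
  have h₂ := hv.2.1 ⟨k + 1, hk⟩
  rw [shiftedRow, wE_append (isSeminormal_DLet _ _), hφ, hε, hEbarred, hEunbarred,
    eD_add_one hv hk]
  by_cases hlt : v.2 ⟨k + 1, hk⟩ < v.1 ⟨k + 1, hk⟩
  · rw [if_neg hlt.not_ge, if_pos hlt, if_pos (h₂.trans_lt hlt)]
    rfl
  · rw [if_pos (not_lt.1 hlt), if_neg hlt]
    split_ifs <;> rfl

theorem wE_shiftedRow_last (hv : DMem m s v) :
    wE (DLet (m + 6) (m + 6)) (shiftedRow v) = (eD m s (m + 4) v).map shiftedRow := by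
  have hmem : ∀ w ∈ eD m s (m + 3) (flipLast v), DMem m s w := by
    intro w hw
    rw [eD] at hw
    split_ifs at hw with h
    · exact Option.some.inj hw ▸ h
    · exact (Option.not_mem_none w hw).elim
  have hE := wE_shiftedRow_of_lt (dMem_flipLast hv) (k := m + 2) (by omega)
  rw [← flipLast_flipLast v, shiftedRow_flipLast (dMem_flipLast hv),
    wE_map (isRaisingHom_swap (by omega)), flipLast_flipLast]
  rw [show m + 6 - 1 = m + 2 + 3 by omega, hE, eD_last_eq_flipLast hv, Option.map_map,
    Option.map_map]
  exact Option.map_congr fun w hw => (shiftedRow_flipLast (hmem w hw)).symm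

theorem wE_shiftedRow (hv : DMem m s v) {i : ℕ} (h1 : 1 ≤ i) (hi : i ≤ m + 4) :
    wE (DLet (m + 6) (i + 2)) (shiftedRow v) = (eD m s i v).map shiftedRow := by
  obtain rfl | hlt := hi.eq_or_lt
  · exact wE_shiftedRow_last hv
  · obtain ⟨k, rfl⟩ := Nat.exists_eq_add_of_le' h1
    exact wE_shiftedRow_of_lt hv hlt

theorem wF_shiftedRow (hv : DMem m s v) {i : ℕ} (h1 : 1 ≤ i) (hi : i ≤ m + 4) :
    wF (DLet (m + 6) (i + 2)) (shiftedRow v) = (fD m s i v).map shiftedRow := by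
  rw [wF_eq_wE_of_dual (isSeminormal_DLet _ _) (isRaisingHom_neg _ _) neg_involutive,
    ← shiftedRow_swap, wE_shiftedRow hv.swap h1 hi, fD_eq_eD_swap hv, Option.map_map,
    Option.map_map]
  simp [Function.comp_def, shiftedRow_swap]

end RowWords

/-- For `n > 5` (here `n = N+6`), the map `i_s` from the
`A₁^{(1)} ⊕ D_{n−2}^{(1)}`-crystal `B̂^{1,s} × B^{1,s}` to `(B^{2,1})^{⊗s}`
intertwines the crystal operators: `ẽ₁^A` and `f̃₁^A` with `ẽ₁, f̃₁`, and
`ẽ_i^D, f̃_i^D` with `ẽ_{i+2}, f̃_{i+2}` for `1 ≤ i ≤ n−2`. -/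
theorem is_intertwines (N s : ℕ) (hs : 1 ≤ s) :
    ∀ (j : ℕ), j ≤ s → ∀ v : DV N, DMem N s v →
      (wE (DLet (N + 6) 1) (isFlat N s j v) =
        if j < s then some (isFlat N s (j + 1) v) else none) ∧
      (wF (DLet (N + 6) 1) (isFlat N s j v) =
        if 0 < j then some (isFlat N s (j - 1) v) else none) ∧
      (∀ i, 1 ≤ i → i ≤ N + 4 →
        wE (DLet (N + 6) (i + 2)) (isFlat N s j v) = (eD N s i v).map (isFlat N s j) ∧
        wF (DLet (N + 6) (i + 2)) (isFlat N s j v) = (fD N s i v).map (isFlat N s j)) := by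
  intro j hj v hv
  have hlen : (firstRow s j).length = (shiftedRow v).length := by
    rw [length_firstRow hj, length_shiftedRow hv]
  obtain ⟨-, hE₁, hF₁⟩ := wEps_wE_wF_interleave_of_neutral_right (isSeminormal_DLet (N + 6) 1)
    hlen.le fun b hb => by
      have := two_lt_natAbs_of_mem_shiftedRow hb
      exact isNeutral_DLet_of_ne (by omega) (by omega) (by omega)
  simp only [isFlat_eq_interleave_comp, Function.comp_apply]
  refine ⟨?_, ?_, fun i h1 hi => ?_⟩
  · rw [hE₁, wE_firstRow (by omega)]
    split_ifs <;> rfl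
  · rw [hF₁, wF_firstRow (by omega) hj]
    split_ifs <;> rfl
  · obtain ⟨-, hE, hF⟩ := wEps_wE_wF_interleave_of_neutral_left
      (isSeminormal_DLet (N + 6) (i + 2)) hlen.ge fun c hc => by
        have := eq_two_or_eq_one_of_mem_firstRow hc
        exact isNeutral_DLet_of_natAbs_lt (by omega) (by omega)
    rw [hE, hF, wE_shiftedRow hv h1 hi, wF_shiftedRow hv h1 hi, Option.map_map, Option.map_map]
    exact ⟨rfl, rfl⟩
end
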